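/- arXiv:1609.02490 — 2 statements merged into one kernel-verified Lean document; each statement's English description precedes it below -/
import Mathlib

section
/- Let α ∈ ℝ^d have nonnegative entries and let X₁, X₂, X₃ be i.i.d. N(0,D_α). Then the characteristic function of the random vector (⟨X₁,X₂⟩, ⟨X₁,X₃⟩, ⟨X₂,X₃⟩) ∈ ℝ³ is given by φ(a,b,c) = ∏_{i=1}^d (1 + α_i²(a²+b²+c²) + 2α_i³abc·i)^{−1/2}, where the complex square root is the principal branch. -/
open MeasureTheory ProbabilityTheory Real Filter
open scoped Classical ENNReal NNReal

noncomputable section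

/-- Euclidean inner product on `Fin d → ℝ`. -/
def dotp {d : ℕ} (x y : Fin d → ℝ) : ℝ := ∑ i, x i * y i

/-- The `q`-norm of a vector `α ∈ ℝ^d`. -/
def nrm {d : ℕ} (q : ℕ) (α : Fin d → ℝ) : ℝ := (∑ i, α i ^ q) ^ ((1 : ℝ) / q)

/-- The centered Gaussian measure `N(0, D_α)` on `ℝ^d`, `D_α = diag α`. -/
def gaussPi (d : ℕ) (α : Fin d → ℝ) : Measure (Fin d → ℝ) :=
  Measure.pi fun i => gaussianReal 0 (Real.toNNReal (α i))

/-- The law of `n` i.i.d. samples from `N(0, D_α)`. -/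
def sampleMeasure (n d : ℕ) (α : Fin d → ℝ) : Measure (Fin n → Fin d → ℝ) :=
  Measure.pi fun _ => gaussPi d α

/-- `t` is the `p`-th upper quantile of `⟨X₁, X₂⟩` for `X₁, X₂` i.i.d. `N(0, D_α)`. -/
def IsThreshold (d : ℕ) (α : Fin d → ℝ) (p t : ℝ) : Prop :=
  ((gaussPi d α).prod (gaussPi d α)) {xy | t ≤ dotp xy.1 xy.2} = ENNReal.ofReal p

instance (n : ℕ) : MeasurableSpace (SimpleGraph (Fin n)) := ⊤

/-- The anisotropic random geometric graph `G(n, p, α)`, with threshold `t = t_{p,α}`. -/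
def geomGraph (n d : ℕ) (α : Fin d → ℝ) (t : ℝ) : Measure (SimpleGraph (Fin n)) :=
  Measure.map (fun X => SimpleGraph.fromRel fun i j => t ≤ dotp (X i) (X j))
    (sampleMeasure n d α)

/-- The Erdős–Rényi random graph `G(n, p)`. -/
def erGraph (n : ℕ) (p : ℝ) : Measure (SimpleGraph (Fin n)) :=
  Measure.map (fun x => SimpleGraph.fromRel fun i j => x s(i, j) ≤ p)
    (Measure.pi fun _ : Sym2 (Fin n) => volume.restrict (Set.Icc (0 : ℝ) 1))

/-- Total variation distance between two measures. -/
def tvDist {Ω : Type*} [MeasurableSpace Ω] (μ ν : Measure Ω) : ℝ :=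
  ⨆ s : {s : Set Ω // MeasurableSet s}, |(μ s.1).toReal - (ν s.1).toReal|

/-!
Across coordinates the samples are independent, so the expectation factors into one integral
`∫ exp (i q)` per coordinate, where `q` is a quadratic form in three independent scalar Gaussians
of variances `u`, `v`, `w`. Integrating out one variable at a time keeps the integrand of the form
`exp (A x² + B x + C)`, and each integration contributes `(1 - 2 σ² A) ^ (-1/2)`: the last variable
gives `1`, the middle one gives `D ^ (-1/2)` with `D = 1 + v w c²`, and the first one gives
`(P / D) ^ (-1/2)`, where `P ^ (-1/2)` is the factor in the theorem. The last two contributions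
multiply to the principal branch of `P ^ (-1/2)` because `D` is a positive real.
-/

lemma ofReal_mul_cpow {r : ℝ} (hr : 0 ≤ r) (z s : ℂ) :
    ((r : ℂ) * z) ^ s = (r : ℂ) ^ s * z ^ s := by
  rcases eq_or_ne s 0 with rfl | hs
  · simp
  rcases hr.eq_or_lt with rfl | hr
  · simp [Complex.zero_cpow hs]
  rcases eq_or_ne z 0 with rfl | hz
  · simp [Complex.zero_cpow hs]
  have hr' : (r : ℂ) ≠ 0 := Complex.ofReal_ne_zero.2 hr.ne'
  rw [Complex.cpow_def_of_ne_zero (mul_ne_zero hr' hz), Complex.cpow_def_of_ne_zero hr',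
    Complex.cpow_def_of_ne_zero hz, Complex.log_ofReal_mul hr hz, Complex.ofReal_log hr.le,
    add_mul, Complex.exp_add]

lemma inv_sqrt_mul_div_cpow_half {r : ℝ} (hr : 0 < r) {w : ℂ} (hw : w ∈ Complex.slitPlane) :
    ((√r)⁻¹ : ℂ) * ((r : ℂ) / w) ^ (1 / 2 : ℂ) = w ^ (-(1 / 2) : ℂ) := by
  have sqrt_eq : (√r : ℂ) = (r : ℂ) ^ (1 / 2 : ℂ) := by
    rw [Real.sqrt_eq_rpow, Complex.ofReal_cpow hr.le]
    norm_num
  have sqrt_ne : (√r : ℂ) ≠ 0 := Complex.ofReal_ne_zero.2 (Real.sqrt_pos.2 hr).ne'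
  rw [div_eq_mul_inv, ofReal_mul_cpow hr.le, ← sqrt_eq, inv_mul_cancel_left₀ sqrt_ne,
    Complex.inv_cpow _ _ (Complex.slitPlane_arg_ne_pi hw), Complex.cpow_neg]

lemma gaussianPDFReal_smul_cexp_quadratic (m : ℝ) {v : ℝ≥0} (hv : v ≠ 0) (A B C : ℂ) (x : ℝ) :
    gaussianPDFReal m v x • Complex.exp (A * x ^ 2 + B * x + C)
      = ((√(2 * π * v))⁻¹ : ℂ) * Complex.exp
          (-((1 - 2 * v * A) / (2 * v)) * x ^ 2 + (B + m / v) * x + (C - m ^ 2 / (2 * v))) := by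
  have hv' : (v : ℂ) ≠ 0 := by exact_mod_cast hv
  rw [gaussianPDFReal, Complex.real_smul, Complex.ofReal_mul, Complex.ofReal_inv,
    Complex.ofReal_exp, mul_assoc, ← Complex.exp_add]
  congr 2
  push_cast
  field

lemma integral_cexp_quadratic_gaussianReal (m : ℝ) (v : ℝ≥0) {A : ℂ} (hA : 2 * v * A.re < 1)
    (B C : ℂ) :
    ∫ x : ℝ, Complex.exp (A * x ^ 2 + B * x + C) ∂(gaussianReal m v)
      = (1 - 2 * v * A) ^ (-(1 / 2) : ℂ)
        * Complex.exp (C + (A * m ^ 2 + B * m + v * B ^ 2 / 2) / (1 - 2 * v * A)) := by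
  rcases eq_or_ne v 0 with rfl | hv
  · simp [add_comm]
  have hv' : (v : ℂ) ≠ 0 := by exact_mod_cast hv
  have re_pos : 0 < (1 - 2 * v * A).re := by simpa [mul_assoc] using hA
  have lead_re_neg : (-((1 - 2 * v * A) / (2 * v))).re < 0 := by
    rw [Complex.neg_re, neg_lt_zero, ← Complex.ofReal_ofNat 2, ← Complex.ofReal_mul,
      Complex.div_ofReal_re]
    exact div_pos (by simpa using re_pos) (by positivity)
  simp_rw [integral_gaussianReal_eq_integral_smul hv, gaussianPDFReal_smul_cexp_quadratic m hv]
  rw [integral_const_mul, integral_cexp_quadratic lead_re_neg, ← mul_assoc]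
  set w : ℂ := 1 - 2 * v * A with w_def
  have hw : w ≠ 0 := fun h => by simp [h] at re_pos
  congr 1
  · rw [← inv_sqrt_mul_div_cpow_half (r := 2 * π * v) (by positivity) (Or.inl re_pos)]
    congr 2
    push_cast
    field
  · have hA' : A = (1 - w) / (2 * v) := by rw [w_def]; field
    rw [hA']
    congr 1
    field

lemma measurePreserving_pi_swap {κ ι : Type*} [Fintype κ] [Fintype ι] {E : κ → ι → Type*}
    [∀ k i, MeasurableSpace (E k i)] (μ : ∀ k i, Measure (E k i)) [∀ k i, SigmaFinite (μ k i)] :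
    MeasurePreserving (fun (x : ∀ k i, E k i) i k => x k i)
      (Measure.pi fun k => Measure.pi (μ k)) (Measure.pi fun i => Measure.pi fun k => μ k i) := by
  have swap_meas : Measurable (fun (x : ∀ k i, E k i) i k => x k i) := by fun_prop
  refine ⟨swap_meas, (Measure.pi_eq_generateFrom (fun _ => generateFrom_pi)
    (fun _ => isPiSystem_pi)
    (fun i => Measure.FiniteSpanningSetsIn.pi fun k => (μ k i).toFiniteSpanningSetsIn) ?_).symm⟩
  intro s hs
  choose t t_meas t_eq using hs
  obtain rfl : (fun i => Set.univ.pi (t i)) = s := funext t_eq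
  have preimage_eq : (fun (x : ∀ k i, E k i) i k => x k i) ⁻¹'
      (Set.univ.pi fun i => Set.univ.pi (t i))
        = Set.univ.pi fun k => Set.univ.pi fun i => t i k := by
    ext x
    simp only [Set.mem_preimage, Set.mem_univ_pi]
    exact forall_comm
  have box_meas : MeasurableSet (Set.univ.pi fun i => Set.univ.pi (t i)) :=
    .univ_pi fun i => .univ_pi fun k => t_meas i k trivial
  simp only [Measure.map_apply swap_meas box_meas, preimage_eq, Measure.pi_pi]
  exact Finset.prod_comm

lemma integral_pi_pi_prod_eq_prod {𝕜 κ ι E : Type*} [RCLike 𝕜] [Fintype κ] [Fintype ι]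
    [MeasurableSpace E] (μ : κ → ι → Measure E) [∀ k i, SigmaFinite (μ k i)]
    {f : ι → (κ → E) → 𝕜} (hf : ∀ i, Measurable (f i)) :
    ∫ X : κ → ι → E, ∏ i, f i (fun k => X k i) ∂(Measure.pi fun k => Measure.pi (μ k))
      = ∏ i, ∫ x, f i x ∂(Measure.pi fun k => μ k i) := by
  rw [← integral_fintype_prod_eq_prod, ← (measurePreserving_pi_swap μ).map_eq,
    integral_map (measurePreserving_pi_swap μ).measurable.aemeasurable]
  exact (by fun_prop : Measurable _).aestronglyMeasurable

lemma measurePreserving_vec_three {E : Type*} [MeasurableSpace E] (μ : Fin 3 → Measure E)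
    [∀ k, SigmaFinite (μ k)] :
    MeasurePreserving (fun p : E × E × E => ![p.1, p.2.1, p.2.2])
      ((μ 0).prod ((μ 1).prod (μ 2))) (Measure.pi μ) := by
  convert (measurePreserving_piFinSuccAbove μ 0).symm.comp <|
    (MeasurePreserving.id (μ 0)).prod (measurePreserving_piFinTwo fun k : Fin 2 => μ k.succ).symm
    using 1
  · ext p k
    fin_cases k <;> rfl
  · rfl

lemma integral_pi_fin_three {E F : Type*} [MeasurableSpace E] [NormedAddCommGroup F]
    [NormedSpace ℝ F] (μ : Fin 3 → Measure E) [∀ k, SigmaFinite (μ k)] {f : (Fin 3 → E) → F}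
    (hf : Integrable f (Measure.pi μ)) :
    ∫ x, f x ∂(Measure.pi μ) = ∫ x, ∫ y, ∫ z, f ![x, y, z] ∂(μ 2) ∂(μ 1) ∂(μ 0) := by
  have hvec := measurePreserving_vec_three μ
  have hfvec := hvec.integrable_comp_of_integrable hf
  rw [← hvec.map_eq, integral_map hvec.measurable.aemeasurable (hvec.map_eq ▸ hf.1),
    ← Function.comp_def f, integral_prod _ hfvec]
  refine integral_congr_ae ?_
  filter_upwards [hfvec.prod_right_ae] with x hx using integral_prod _ hx

/-- The quadratic form of the symmetric `3 × 3` matrix with zero diagonal and entries `a / 2`,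
`b / 2`, `c / 2` above it. Evaluated at the `i`-th coordinates of `X₁, X₂, X₃` it is the
contribution of `i` to `a⟨X₁,X₂⟩ + b⟨X₁,X₃⟩ + c⟨X₂,X₃⟩`. -/
def offDiagForm (a b c : ℝ) (x : Fin 3 → ℝ) : ℝ :=
  a * (x 0 * x 1) + b * (x 0 * x 2) + c * (x 1 * x 2)

section offDiagForm

variable (a b c : ℝ)

lemma measurable_offDiagForm : Measurable (offDiagForm a b c) := by
  unfold offDiagForm
  fun_prop

lemma integrable_cexp_offDiagForm (μ : Measure (Fin 3 → ℝ)) [IsFiniteMeasure μ] :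
    Integrable (fun x => Complex.exp (Complex.I * offDiagForm a b c x)) μ := by
  have hmeas := measurable_offDiagForm a b c
  refine .of_bound (by fun_prop : Measurable _).aestronglyMeasurable 1 (ae_of_all _ fun x => ?_)
  exact (Complex.norm_exp_I_mul_ofReal _).le

lemma cexp_dotProduct_eq_prod_offDiagForm {ι : Type*} [Fintype ι] (X : Fin 3 → ι → ℝ) :
    Complex.exp (Complex.I * (a * (X 0 ⬝ᵥ X 1 : ℝ) + b * (X 0 ⬝ᵥ X 2 : ℝ) + c * (X 1 ⬝ᵥ X 2 : ℝ)))
      = ∏ i, Complex.exp (Complex.I * offDiagForm a b c fun k => X k i) := by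
  rw [← Complex.exp_sum, ← Finset.mul_sum]
  simp only [offDiagForm, dotProduct, Complex.ofReal_sum, Complex.ofReal_add, Complex.ofReal_mul,
    Finset.sum_add_distrib, Finset.mul_sum]

lemma integral_cexp_offDiagForm_gaussianReal (w : ℝ≥0) (x y : ℝ) :
    ∫ z, Complex.exp (Complex.I * offDiagForm a b c ![x, y, z]) ∂(gaussianReal 0 w)
      = Complex.exp (-(w * c ^ 2 / 2) * y ^ 2 + (Complex.I * a - w * b * c) * x * y
          + -(w * b ^ 2 / 2) * x ^ 2) := by
  calc
    _ = ∫ z : ℝ, Complex.exp (0 * z ^ 2 + Complex.I * (b * x + c * y) * z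
          + Complex.I * a * x * y) ∂(gaussianReal 0 w) := by
      simp only [offDiagForm, Matrix.cons_val]
      congr! 3 with z
      push_cast
      ring
    _ = Complex.exp (Complex.I * a * x * y + w * (Complex.I * (b * x + c * y)) ^ 2 / 2) := by
      rw [integral_cexp_quadratic_gaussianReal 0 w (by simp)]
      simp
    _ = _ := by
      rw [mul_pow, Complex.I_sq]
      ring_nf

lemma integral_integral_cexp_offDiagForm_gaussianReal (v w : ℝ≥0) (x : ℝ) :
    ∫ y, ∫ z, Complex.exp (Complex.I * offDiagForm a b c ![x, y, z])
        ∂(gaussianReal 0 w) ∂(gaussianReal 0 v)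
      = (1 + v * w * c ^ 2 : ℂ) ^ (-(1 / 2) : ℂ)
        * Complex.exp (-(v * a ^ 2 + w * b ^ 2 + 2 * v * w * a * b * c * Complex.I)
            / (2 * (1 + v * w * c ^ 2)) * x ^ 2) := by
  have re_le : (-(w * c ^ 2 / 2) : ℂ).re ≤ 0 := by
    rw [show (-(w * c ^ 2 / 2) : ℂ) = ((-(w * c ^ 2 / 2) : ℝ) : ℂ) by simp, Complex.ofReal_re,
      neg_nonpos]
    positivity
  set D : ℂ := 1 + v * w * c ^ 2 with D_def
  have D_ne : D ≠ 0 := by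
    rw [D_def]
    exact_mod_cast (by positivity : (1 + v * w * c ^ 2 : ℝ) ≠ 0)
  have D_eq : 1 - 2 * v * (-(w * c ^ 2 / 2) : ℂ) = D := by ring
  simp_rw [integral_cexp_offDiagForm_gaussianReal]
  rw [integral_cexp_quadratic_gaussianReal 0 v (by nlinarith [v.coe_nonneg]), D_eq]
  have sq_eq : ((Complex.I * a - w * b * c) * x) ^ 2
      = (w ^ 2 * b ^ 2 * c ^ 2 - a ^ 2 - 2 * w * a * b * c * Complex.I) * x ^ 2 := by
    linear_combination (a ^ 2 * x ^ 2 : ℂ) * Complex.I_sq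
  rw [sq_eq]
  congr 2
  simp only [Complex.ofReal_zero, ne_eq, OfNat.ofNat_ne_zero, not_false_eq_true, zero_pow, mul_zero,
    zero_add]
  field_simp
  rw [D_def]
  ring

theorem integral_cexp_offDiagForm_pi_gaussianReal (v : Fin 3 → ℝ≥0) :
    ∫ x, Complex.exp (Complex.I * offDiagForm a b c x)
        ∂(Measure.pi fun k => gaussianReal 0 (v k))
      = (1 + v 0 * v 1 * a ^ 2 + v 0 * v 2 * b ^ 2 + v 1 * v 2 * c ^ 2
          + 2 * v 0 * v 1 * v 2 * a * b * c * Complex.I : ℂ) ^ (-(1 / 2) : ℂ) := by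
  set D : ℝ := 1 + v 1 * v 2 * c ^ 2 with D_def
  have D_pos : 0 < D := by positivity
  have D_ne : (D : ℂ) ≠ 0 := Complex.ofReal_ne_zero.2 D_pos.ne'
  set A : ℂ := -(v 1 * a ^ 2 + v 2 * b ^ 2 + 2 * v 1 * v 2 * a * b * c * Complex.I) / (2 * D)
    with A_def
  have A_re : A.re ≤ 0 := by
    have : A = ((-((v 1 * a ^ 2 + v 2 * b ^ 2) / (2 * D)) : ℝ) : ℂ)
        + ((-(v 1 * v 2 * a * b * c / D) : ℝ) : ℂ) * Complex.I := by
      rw [A_def]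
      push_cast
      field
    rw [this]
    simp only [Complex.add_re, Complex.ofReal_re, Complex.re_ofReal_mul, Complex.I_re, mul_zero,
      add_zero, neg_nonpos]
    positivity
  calc
    _ = ∫ x : ℝ, (D : ℂ) ^ (-(1 / 2) : ℂ) * Complex.exp (A * x ^ 2 + 0 * x + 0)
          ∂(gaussianReal 0 (v 0)) := by
      rw [integral_pi_fin_three _ (integrable_cexp_offDiagForm a b c _)]
      simp_rw [integral_integral_cexp_offDiagForm_gaussianReal]
      simp [A_def, D_def]
    _ = (D * (1 - 2 * v 0 * A)) ^ (-(1 / 2) : ℂ) := by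
      rw [integral_const_mul, integral_cexp_quadratic_gaussianReal 0 (v 0)
        (by nlinarith [(v 0).coe_nonneg]), ofReal_mul_cpow D_pos.le]
      simp
    _ = _ := by
      congr 1
      rw [A_def]
      field_simp
      rw [D_def]
      push_cast
      ring

end offDiagForm

theorem charFun_inner_triple_general {ι : Type*} [Fintype ι] (v : Fin 3 → ι → ℝ≥0) (a b c : ℝ) :
    ∫ X : Fin 3 → ι → ℝ, Complex.exp (Complex.I *
        (a * (X 0 ⬝ᵥ X 1 : ℝ) + b * (X 0 ⬝ᵥ X 2 : ℝ) + c * (X 1 ⬝ᵥ X 2 : ℝ)))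
        ∂(Measure.pi fun k => Measure.pi fun i => gaussianReal 0 (v k i))
      = ∏ i, (1 + v 0 i * v 1 i * a ^ 2 + v 0 i * v 2 i * b ^ 2 + v 1 i * v 2 i * c ^ 2
          + 2 * v 0 i * v 1 i * v 2 i * a * b * c * Complex.I : ℂ) ^ (-(1 / 2) : ℂ) := by
  have hmeas := measurable_offDiagForm a b c
  simp_rw [cexp_dotProduct_eq_prod_offDiagForm]
  rw [integral_pi_pi_prod_eq_prod (fun k i => gaussianReal 0 (v k i))
    (f := fun _ x => Complex.exp (Complex.I * offDiagForm a b c x)) (by fun_prop)]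
  exact Finset.prod_congr rfl fun i _ =>
    integral_cexp_offDiagForm_pi_gaussianReal a b c fun k => v k i

/-- formula (9). The characteristic function of
`(⟨X₁,X₂⟩, ⟨X₁,X₃⟩, ⟨X₂,X₃⟩)` for `X₁,X₂,X₃` i.i.d. `N(0,D_α)` is
`(a,b,c) ↦ ∏_i (1 + α_i²(a²+b²+c²) + 2α_i³abc·i)^{-1/2}` (principal branch). -/
theorem charFun_inner_triple (d : ℕ) (α : Fin d → ℝ) (hα : ∀ i, 0 ≤ α i)
    (a b c : ℝ) :
    (∫ X, Complex.exp (Complex.I *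
        ((a : ℂ) * (dotp (X 0) (X 1) : ℝ) + (b : ℂ) * (dotp (X 0) (X 2) : ℝ)
          + (c : ℂ) * (dotp (X 1) (X 2) : ℝ))) ∂(sampleMeasure 3 d α))
      = ∏ i, ((1 : ℂ) + (α i : ℂ) ^ 2 * ((a : ℂ) ^ 2 + (b : ℂ) ^ 2 + (c : ℂ) ^ 2)
          + 2 * (α i : ℂ) ^ 3 * (a : ℂ) * (b : ℂ) * (c : ℂ) * Complex.I)
        ^ (-(1 / 2 : ℂ)) := by
  refine (charFun_inner_triple_general (fun _ i => (α i).toNNReal) a b c).trans ?_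
  refine Finset.prod_congr rfl fun i _ => ?_
  rw [Real.coe_toNNReal _ (hα i)]
  ring_nf

end
end

section
/- Let p ∈ (0,1). There exist constants δ_p, c_p > 0 depending only on p such that for every n ≥ 3 and every α ∈ ℝ^d with entries in [0,1], at least one entry equal to 1, and ‖α‖₂² > c_p, the expected signed triangle count of G(n,p,α) satisfies E[τ(G(n,p,α))] ≥ δ_p · C(n,3) · (‖α‖₃/‖α‖₂)³, where C(n,3) is the binomial coefficient and τ(G) = ∑_{{i,j,k}} (A_{ij}−p)(A_{ik}−p)(A_{jk}−p) (sum over 3-element subsets of {1,…,n}). -/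
open MeasureTheory ProbabilityTheory Real Filter
open scoped Classical ENNReal NNReal

noncomputable section

/-- The edge indicator `A_{ij}` of `G(n,p,α)` as a function of the sample points. -/
def edgeInd {n d : ℕ} (t : ℝ) (X : Fin n → Fin d → ℝ) (i j : Fin n) : ℝ :=
  if t ≤ dotp (X i) (X j) then 1 else 0

/-- The signed triangle count `τ(G(n,p,α))`, written as `1/6` times the sum over
ordered triples of pairwise distinct vertices. -/
def tauCount {n d : ℕ} (p t : ℝ) (X : Fin n → Fin d → ℝ) : ℝ :=
  (1 / 6) * ∑ i, ∑ j, ∑ k,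
    if i ≠ j ∧ i ≠ k ∧ j ≠ k then
      (edgeInd t X i j - p) * (edgeInd t X i k - p) * (edgeInd t X j k - p)
    else 0

/-
After rescaling, `‖α‖₂ = 1`. Given the two Gaussian vectors `y`, `z`, the pair `(⟨x, y⟩, ⟨x, z⟩)`
is centered Gaussian with a covariance matrix close to the identity, and its off-diagonal entry
`ρ = ∑ αᵢ yᵢ zᵢ` makes the events `⟨x, y⟩ ≥ t` and `⟨x, z⟩ ≥ t` have covariance `φ(t)² ρ` up to
quadratic error. So the expected signed triangle is `φ(t)² E[(1{⟨y, z⟩ ≥ t} - p) ρ] + O(‖α‖₄⁴)`.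
Gaussian integration by parts in `z` turns the main term into one of order `∑ αᵢ² E[yᵢ²] = ‖α‖₃³`.
-/

local notation "γ" => gaussianReal 0 1
local notation "φ" => gaussianPDFReal 0 1

section StandardGaussian

/-- The upper tail `P(g ≥ u)` of a standard Gaussian variable `g`. -/
def gaussTail (u : ℝ) : ℝ := (γ).real (Set.Ici u)

lemma gaussianPDFReal_zero_one (x : ℝ) : φ x = (√(2 * π))⁻¹ * rexp (-x ^ 2 / 2) := by
  simp [gaussianPDFReal]

lemma gaussianPDFReal_zero_one_pos (x : ℝ) : 0 < φ x := gaussianPDFReal_pos 0 1 x one_ne_zero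

lemma inv_sqrt_two_pi_le_one : (√(2 * π))⁻¹ ≤ 1 :=
  inv_le_one_of_one_le₀ (Real.one_le_sqrt.2 (by linarith [Real.pi_gt_three]))

lemma gaussianPDFReal_zero_one_le_one (x : ℝ) : φ x ≤ 1 := by
  rw [gaussianPDFReal_zero_one]
  exact mul_le_one₀ inv_sqrt_two_pi_le_one (Real.exp_nonneg _)
    (Real.exp_le_one_iff.2 (by nlinarith [sq_nonneg x]))

lemma abs_gaussianPDFReal_zero_one_le_one (x : ℝ) : |φ x| ≤ 1 := by
  rw [abs_of_pos (gaussianPDFReal_zero_one_pos x)]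
  exact gaussianPDFReal_zero_one_le_one x

lemma gaussianPDFReal_zero_one_le_of_abs_le {x y : ℝ} (h : |x| ≤ |y|) : φ y ≤ φ x := by
  rw [gaussianPDFReal_zero_one, gaussianPDFReal_zero_one]
  gcongr _ * rexp (-?_ / 2)
  exact sq_le_sq.2 h

lemma abs_mul_gaussianPDFReal_zero_one_le_one (x : ℝ) : |x * φ x| ≤ 1 := by
  have h_exp : |x| ≤ rexp (x ^ 2 / 2) := by
    nlinarith [Real.add_one_le_exp (x ^ 2 / 2), sq_nonneg (|x| - 1), sq_abs x]
  calc |x * φ x| = (√(2 * π))⁻¹ * (|x| * rexp (-x ^ 2 / 2)) := by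
        rw [abs_mul, abs_of_pos (gaussianPDFReal_zero_one_pos x), gaussianPDFReal_zero_one]; ring
    _ ≤ 1 * (rexp (x ^ 2 / 2) * rexp (-x ^ 2 / 2)) := by
        gcongr
        exact inv_sqrt_two_pi_le_one
    _ = 1 := by rw [← Real.exp_add]; ring_nf; exact Real.exp_zero

lemma hasDerivAt_gaussianPDFReal_zero_one (x : ℝ) : HasDerivAt φ (-(x * φ x)) x := by
  have h_exponent : HasDerivAt (fun x : ℝ => -x ^ 2 / 2) (-x) x :=
    (((hasDerivAt_pow 2 x).fun_neg).div_const 2).congr_deriv (by simp; ring)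
  rw [gaussianPDFReal_zero_one, funext gaussianPDFReal_zero_one]
  exact (h_exponent.exp.const_mul _).congr_deriv (by ring)

lemma continuous_gaussianPDFReal_zero_one : Continuous φ :=
  continuous_iff_continuousAt.2 fun x => (hasDerivAt_gaussianPDFReal_zero_one x).continuousAt

lemma abs_gaussianPDFReal_zero_one_sub_le (u v : ℝ) : |φ u - φ v| ≤ |u - v| := by
  simpa using Convex.norm_image_sub_le_of_norm_hasDerivWithin_le (C := 1) (s := Set.univ)
    (fun x _ => (hasDerivAt_gaussianPDFReal_zero_one x).hasDerivWithinAt)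
    (fun x _ => by simpa using abs_mul_gaussianPDFReal_zero_one_le_one x)
    convex_univ (Set.mem_univ v) (Set.mem_univ u)

lemma gaussTail_eq_integral (u : ℝ) : gaussTail u = ∫ x in Set.Ioi u, φ x := by
  rw [gaussTail, Measure.real, gaussianReal_apply_eq_integral 0 one_ne_zero, ENNReal.toReal_ofReal]
  · exact integral_Ici_eq_integral_Ioi
  · exact integral_nonneg fun x => gaussianPDFReal_nonneg 0 1 x

lemma gaussTail_sub (u v : ℝ) : gaussTail u - gaussTail v = ∫ x in u..v, φ x := by
  have h_int : Integrable φ := integrable_gaussianPDFReal 0 1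
  rw [gaussTail_eq_integral, gaussTail_eq_integral,
    intervalIntegral.integral_Ioi_sub_Ioi' h_int.integrableOn h_int.integrableOn]

lemma gaussTail_mem_Icc (u : ℝ) : gaussTail u ∈ Set.Icc (0 : ℝ) 1 :=
  ⟨measureReal_nonneg, measureReal_le_one⟩

lemma abs_gaussTail_sub_le (u v : ℝ) : |gaussTail u - gaussTail v| ≤ |u - v| := by
  rw [gaussTail_sub, abs_sub_comm u v, ← one_mul |v - u|, ← Real.norm_eq_abs]
  refine intervalIntegral.norm_integral_le_of_norm_le_const fun x _ => ?_
  rw [Real.norm_eq_abs, abs_of_pos (gaussianPDFReal_zero_one_pos x)]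
  exact gaussianPDFReal_zero_one_le_one x

lemma continuous_gaussTail : Continuous gaussTail :=
  (LipschitzWith.of_dist_le_mul (K := 1) fun u v => by
    simpa [Real.dist_eq] using abs_gaussTail_sub_le u v).continuous

lemma abs_gaussTail_taylor_le (u v : ℝ) :
    |gaussTail u - gaussTail v + φ v * (u - v)| ≤ (u - v) ^ 2 := by
  have h_eq : gaussTail u - gaussTail v + φ v * (u - v) = ∫ x in u..v, (φ x - φ v) := by
    rw [gaussTail_sub, intervalIntegral.integral_sub
      (continuous_gaussianPDFReal_zero_one.intervalIntegrable _ _) (by simp)]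
    simp only [intervalIntegral.integral_const, smul_eq_mul]
    ring
  rw [h_eq, ← sq_abs (u - v), sq, abs_sub_comm u v, ← Real.norm_eq_abs (∫ x in u..v, _)]
  refine intervalIntegral.norm_integral_le_of_norm_le_const fun x hx => ?_
  calc |φ x - φ v| ≤ |x - v| := abs_gaussianPDFReal_zero_one_sub_le x v
    _ = |v - x| := abs_sub_comm x v
    _ ≤ |v - u| := Set.abs_sub_right_of_mem_uIcc (Set.uIoc_subset_uIcc hx)

lemma integrable_pow_gaussianReal (k : ℕ) : Integrable (fun x : ℝ => x ^ k) γ :=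
  (memLp_id_gaussianReal (k : ℝ≥0)).integrable_norm_pow'.mono' (by fun_prop)
    (ae_of_all _ fun x => by simp)

lemma integrable_id_gaussianReal : Integrable (fun x : ℝ => x) γ := by
  simpa using integrable_pow_gaussianReal 1

lemma integral_sq_gaussianReal : ∫ x, x ^ 2 ∂γ = 1 := by
  have h := variance_fun_id_gaussianReal (μ := 0) (v := 1)
  rwa [variance_of_integral_eq_zero (by fun_prop) integral_id_gaussianReal] at h

lemma integrable_pow_mul_gaussianPDFReal (k : ℕ) : Integrable fun x : ℝ => x ^ k * φ x := by
  have h := integrable_pow_gaussianReal k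
  rw [gaussianReal_of_var_ne_zero 0 one_ne_zero, integrable_withDensity_iff
    (measurable_gaussianPDF 0 1) (ae_of_all _ fun x => gaussianPDF_lt_top)] at h
  simpa using h

lemma integral_pow_four_gaussianReal : ∫ x, x ^ 4 ∂γ = 3 := by
  have h_parts := integral_mul_deriv_eq_deriv_mul_of_integrable
    (u := fun x : ℝ => x ^ 3) (v := φ)
    (fun x _ => hasDerivAt_pow 3 x) (fun x _ => hasDerivAt_gaussianPDFReal_zero_one x)
    ((integrable_pow_mul_gaussianPDFReal 4).neg.congr (ae_of_all _ fun x => by simp; ring))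
    (((integrable_pow_mul_gaussianPDFReal 2).const_mul 3).congr
      (ae_of_all _ fun x => by simp; ring))
    (integrable_pow_mul_gaussianPDFReal 3)
  have h_sq := integral_sq_gaussianReal
  rw [integral_gaussianReal_eq_integral_smul one_ne_zero] at h_sq ⊢
  calc ∫ x, φ x • x ^ 4 = -∫ x, x ^ 3 * -(x * φ x) := by
        rw [← integral_neg]; congr 1; ext x; simp; ring
    _ = ∫ x, 3 * (φ x • x ^ 2) := by
        rw [h_parts, neg_neg]; congr 1; ext x; simp; ring
    _ = 3 := by rw [integral_const_mul, h_sq, mul_one]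

lemma tendsto_gaussianPDFReal_atTop : Tendsto φ atTop (nhds 0) := by
  refine squeeze_zero' (Eventually.of_forall fun x => (gaussianPDFReal_zero_one_pos x).le) ?_
    tendsto_inv_atTop_zero
  filter_upwards [eventually_gt_atTop 0] with x hx
  rw [← one_div, le_div_iff₀ hx, mul_comm]
  exact (le_abs_self _).trans (abs_mul_gaussianPDFReal_zero_one_le_one x)

end StandardGaussian

section SignedIndicator

/-- The centred indicator `1{u ≤ x} - p`; the factor `A_{ij} - p` of the signed triangle count is
its value at `u = t` and `x = ⟨X_i, X_j⟩`. -/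
def signedInd (p u x : ℝ) : ℝ := (if u ≤ x then 1 else 0) - p

lemma signedInd_eq_indicator (p u : ℝ) :
    signedInd p u = fun x => (Set.Ici u).indicator 1 x - p := by
  ext x; simp [signedInd, Set.indicator]

@[fun_prop]
lemma measurable_signedInd (p u : ℝ) : Measurable (signedInd p u) := by
  rw [signedInd_eq_indicator]
  exact (measurable_one.indicator measurableSet_Ici).sub_const p

lemma abs_signedInd_le_one {p : ℝ} (hp : p ∈ Set.Icc (0 : ℝ) 1) (u x : ℝ) :
    |signedInd p u x| ≤ 1 := by
  unfold signedInd
  rw [abs_le]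
  split_ifs <;> constructor <;> linarith [hp.1, hp.2]

lemma signedInd_mul {s : ℝ} (hs : 0 < s) (p u x : ℝ) :
    signedInd p (s * u) (s * x) = signedInd p u x := by
  simp only [signedInd, mul_le_mul_iff_right₀ hs]

lemma integral_signedInd (p u : ℝ) {Ω : Type*} [MeasurableSpace Ω] {P : Measure Ω}
    [IsProbabilityMeasure P] {U : Ω → ℝ} (hU : Measurable U) :
    ∫ ω, signedInd p u (U ω) ∂P = P.real {ω | u ≤ U ω} - p := by
  have h_meas : MeasurableSet {ω | u ≤ U ω} := measurableSet_le measurable_const hU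
  have h_ind : (fun ω => signedInd p u (U ω))
      = fun ω => {ω | u ≤ U ω}.indicator (1 : Ω → ℝ) ω - p := by
    ext ω; simp [signedInd, Set.indicator]
  have h_int : Integrable ({ω | u ≤ U ω}.indicator (1 : Ω → ℝ)) P :=
    (integrable_const 1).indicator h_meas
  rw [h_ind, integral_sub h_int (integrable_const p), integral_indicator_one h_meas]
  simp

lemma integrable_signedInd_comp_mul (p u : ℝ) {Ω : Type*} [MeasurableSpace Ω] {P : Measure Ω}
    {U f : Ω → ℝ} (hU : Measurable U) (hf : Integrable f P) :
    Integrable (fun ω => signedInd p u (U ω) * f ω) P := by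
  refine hf.bdd_mul (c := 1 + |p|) ((measurable_signedInd p u).comp hU).aestronglyMeasurable
    (ae_of_all _ fun ω => ?_)
  unfold signedInd
  refine (norm_sub_le _ _).trans ?_
  split_ifs <;> simp

lemma integral_signedInd_gaussianReal (p u : ℝ) :
    ∫ x, signedInd p u x ∂γ = gaussTail u - p :=
  integral_signedInd p u measurable_id

lemma integral_signedInd_mul_id_gaussianReal (p u : ℝ) : ∫ x, signedInd p u x * x ∂γ = φ u := by
  have h_tail : ∫ x, (Set.Ici u).indicator 1 x * x ∂γ = φ u := by
    rw [integral_gaussianReal_eq_integral_smul one_ne_zero]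
    calc ∫ x, φ x • ((Set.Ici u).indicator 1 x * x)
        = ∫ x, (Set.Ici u).indicator (fun x => x * φ x) x := by
          congr 1; ext x; by_cases h : u ≤ x <;> simp [h, mul_comm]
      _ = ∫ x in Set.Ioi u, x * φ x := by
          rw [integral_indicator measurableSet_Ici, integral_Ici_eq_integral_Ioi]
      _ = φ u := by
          rw [integral_Ioi_of_hasDerivAt_of_tendsto' (f := fun x => -φ x) (m := 0)
            (fun x _ => (hasDerivAt_gaussianPDFReal_zero_one x).fun_neg.congr_deriv (neg_neg _))
            (by simpa using (integrable_pow_mul_gaussianPDFReal 1).integrableOn)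
            (by simpa using tendsto_gaussianPDFReal_atTop.neg)]
          ring
  have h_int : Integrable (fun x => (Set.Ici u).indicator 1 x * x) γ := by
    simpa [signedInd_eq_indicator] using
      integrable_signedInd_comp_mul 0 u measurable_id integrable_id_gaussianReal
  simp only [signedInd_eq_indicator, sub_mul]
  rw [integral_sub h_int (integrable_id_gaussianReal.const_mul p), h_tail, integral_const_mul,
    integral_id_gaussianReal]
  ring

end SignedIndicator

section GaussianPair

variable {Ω : Type*} [MeasurableSpace Ω] {P : Measure Ω} {U V : Ω → ℝ}

lemma gaussianReal_zero_eq_map_sqrt_mul (a : ℝ) :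
    gaussianReal 0 a.toNNReal = (γ).map (√a * ·) := by
  rw [gaussianReal_map_const_mul]
  congr 1
  · simp
  · ext; simp [Real.sq_sqrt', Real.coe_toNNReal']

lemma map_eq_map_sqrt_variance_mul (hU : HasGaussianLaw U P) (hU₀ : P[U] = 0) :
    P.map U = (γ).map (√Var[U; P] * ·) := by
  rw [hU.map_eq_gaussianReal, hU₀, gaussianReal_zero_eq_map_sqrt_mul]

/-- The linear-regression residual `V - (Cov(U, V) / Var U) U`, which for a Gaussian pair is
independent of `U`. -/
def regResidual (U V : Ω → ℝ) (P : Measure Ω) (ω : Ω) : ℝ :=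
  V ω - cov[U, V; P] / Var[U; P] * U ω

lemma hasGaussianLaw_prodMk_residual (hUV : HasGaussianLaw (fun ω => (U ω, V ω)) P) :
    HasGaussianLaw (fun ω => (U ω, regResidual U V P ω)) P :=
  hUV.map_fun ((ContinuousLinearMap.fst ℝ ℝ ℝ).prod (ContinuousLinearMap.snd ℝ ℝ ℝ
    - (cov[U, V; P] / Var[U; P]) • ContinuousLinearMap.fst ℝ ℝ ℝ))

lemma covariance_residual_left (hU : MemLp U 2 P) (hV : MemLp V 2 P) [IsFiniteMeasure P]
    (hU₁ : Var[U; P] ≠ 0) : cov[U, regResidual U V P; P] = 0 := by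
  unfold regResidual
  rw [covariance_fun_sub_right hU hV (hU.const_mul _), covariance_const_mul_right,
    covariance_self hU.aemeasurable, div_mul_cancel₀ _ hU₁, sub_self]

lemma variance_residual (hU : MemLp U 2 P) (hV : MemLp V 2 P) [IsFiniteMeasure P]
    (hU₁ : Var[U; P] ≠ 0) :
    Var[regResidual U V P; P] = Var[V; P] - cov[U, V; P] ^ 2 / Var[U; P] := by
  unfold regResidual
  rw [variance_fun_sub hV (hU.const_mul _), variance_const_mul, covariance_const_mul_right,
    covariance_comm V U]
  field_simp
  ring

lemma map_prodMk_eq_map_regression (hUV : HasGaussianLaw (fun ω => (U ω, V ω)) P)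
    (hU₀ : P[U] = 0) (hV₀ : P[V] = 0) (hU₁ : Var[U; P] ≠ 0) :
    P.map (fun ω => (U ω, V ω)) = ((γ).prod γ).map fun q => (√Var[U; P] * q.1,
      cov[U, V; P] / √Var[U; P] * q.1 + √Var[regResidual U V P; P] * q.2) := by
  have : IsProbabilityMeasure P := hUV.isProbabilityMeasure
  have hW := hasGaussianLaw_prodMk_residual hUV
  have hW₀ : P[regResidual U V P] = 0 := by
    unfold regResidual
    rw [integral_sub hUV.snd.integrable (hUV.fst.integrable.const_mul _), integral_const_mul,
      hU₀, hV₀]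
    simp
  have h_indep : IndepFun U (regResidual U V P) P := hW.indepFun_of_covariance_eq_zero
    (covariance_residual_left hUV.fst.memLp_two hUV.snd.memLp_two hU₁)
  have h_law := (indepFun_iff_map_prod_eq_prod_map_map hW.fst.aemeasurable
    hW.snd.aemeasurable).1 h_indep
  rw [map_eq_map_sqrt_variance_mul hW.fst hU₀, map_eq_map_sqrt_variance_mul hW.snd hW₀,
    Measure.map_prod_map _ _ (by fun_prop) (by fun_prop)] at h_law
  calc P.map (fun ω => (U ω, V ω))
      = (P.map fun ω => (U ω, regResidual U V P ω)).map
          fun q => (q.1, cov[U, V; P] / Var[U; P] * q.1 + q.2) := by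
        rw [AEMeasurable.map_map_of_aemeasurable (by fun_prop) hW.aemeasurable]
        congr 1; ext ω <;> simp [regResidual]
    _ = _ := by
        have h_slope (x : ℝ) :
            cov[U, V; P] / Var[U; P] * (√Var[U; P] * x) = cov[U, V; P] / √Var[U; P] * x := by
          rw [← mul_assoc, div_mul_eq_mul_div, mul_div_assoc, Real.sqrt_div_self, ← div_eq_mul_inv]
        rw [h_law, Measure.map_map (by fun_prop) (by fun_prop)]
        simp only [Function.comp_def, Prod.map, h_slope]

lemma integral_signedInd_mul_of_hasGaussianLaw (hUV : HasGaussianLaw (fun ω => (U ω, V ω)) P)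
    (hU₀ : P[U] = 0) (hV₀ : P[V] = 0) (hU₁ : 0 < Var[U; P]) (p v : ℝ) :
    ∫ ω, signedInd p v (U ω) * V ω ∂P
      = cov[U, V; P] / √Var[U; P] * φ (v / √Var[U; P]) := by
  set a := Var[U; P]
  set c := cov[U, V; P]
  set σ := √Var[regResidual U V P; P]
  have ha : 0 < √a := Real.sqrt_pos.2 hU₁
  have h_scale (x : ℝ) : signedInd p v (√a * x) = signedInd p (v / √a) x := by
    rw [← signedInd_mul ha p (v / √a) x, mul_div_cancel₀ v ha.ne']
  have h_ind := integrable_signedInd_comp_mul p (v / √a) measurable_id (integrable_const (μ := γ) 1)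
  have h_ind_id :=
    integrable_signedInd_comp_mul p (v / √a) measurable_id integrable_id_gaussianReal
  simp only [id, mul_one] at h_ind h_ind_id
  calc ∫ ω, signedInd p v (U ω) * V ω ∂P
      = ∫ z, signedInd p v z.1 * z.2 ∂(P.map fun ω => (U ω, V ω)) :=
        (integral_map (f := fun z : ℝ × ℝ => signedInd p v z.1 * z.2) hUV.aemeasurable
          (by fun_prop)).symm
    _ = ∫ q, (c / √a * (signedInd p (v / √a) q.1 * q.1) * 1
          + signedInd p (v / √a) q.1 * (σ * q.2)) ∂((γ).prod γ) := by
        rw [map_prodMk_eq_map_regression hUV hU₀ hV₀ hU₁.ne',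
          integral_map (by fun_prop) (by fun_prop)]
        congr 1; ext q
        rw [h_scale]
        ring
    _ = c / √a * φ (v / √a) := by
        rw [integral_add ((h_ind_id.const_mul _).mul_prod (integrable_const 1))
          (h_ind.mul_prod (integrable_id_gaussianReal.const_mul σ)),
          integral_prod_mul (fun x => c / √a * (signedInd p (v / √a) x * x)) (fun _ => 1),
          integral_prod_mul (signedInd p (v / √a)) (fun y => σ * y),
          integral_const_mul, integral_const_mul, integral_signedInd_mul_id_gaussianReal,
          integral_id_gaussianReal]
        simp

lemma integral_signedInd_mul_signedInd_of_hasGaussianLaw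
    (hUV : HasGaussianLaw (fun ω => (U ω, V ω)) P) (hU₀ : P[U] = 0) (hV₀ : P[V] = 0)
    (hU₁ : 0 < Var[U; P]) (hW₁ : 0 < Var[regResidual U V P; P]) (p v : ℝ) :
    ∫ ω, signedInd p v (U ω) * signedInd p v (V ω) ∂P
      = ∫ x, signedInd p (v / √Var[U; P]) x * (gaussTail ((v
          - cov[U, V; P] / √Var[U; P] * x) / √Var[regResidual U V P; P]) - p) ∂γ := by
  set a := Var[U; P]
  set c := cov[U, V; P]
  set σ := √Var[regResidual U V P; P]
  have ha : 0 < √a := Real.sqrt_pos.2 hU₁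
  have hσ : 0 < σ := Real.sqrt_pos.2 hW₁
  have h_fst (x : ℝ) : signedInd p v (√a * x) = signedInd p (v / √a) x := by
    rw [← signedInd_mul ha p (v / √a) x, mul_div_cancel₀ v ha.ne']
  have h_snd (x y : ℝ) : signedInd p v (c / √a * x + σ * y)
      = signedInd p ((v - c / √a * x) / σ) y := by
    simp only [signedInd, div_le_iff₀' hσ, sub_le_iff_le_add']
  have h_int : Integrable (fun q : ℝ × ℝ => signedInd p v (√a * q.1)
      * signedInd p v (c / √a * q.1 + σ * q.2)) ((γ).prod γ) :=
    integrable_signedInd_comp_mul p v (by fun_prop) (by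
      simpa using integrable_signedInd_comp_mul p v
        (U := fun q : ℝ × ℝ => c / √a * q.1 + σ * q.2) (by fun_prop) (integrable_const 1))
  calc ∫ ω, signedInd p v (U ω) * signedInd p v (V ω) ∂P
      = ∫ z, signedInd p v z.1 * signedInd p v z.2 ∂(P.map fun ω => (U ω, V ω)) :=
        (integral_map (f := fun z : ℝ × ℝ => signedInd p v z.1 * signedInd p v z.2)
          hUV.aemeasurable (by fun_prop)).symm
    _ = ∫ x, ∫ y, signedInd p v (√a * x) * signedInd p v (c / √a * x + σ * y) ∂γ ∂γ := by
        rw [map_prodMk_eq_map_regression hUV hU₀ hV₀ hU₁.ne',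
          integral_map (by fun_prop) (by fun_prop), integral_prod _ h_int]
    _ = _ := by
        congr 1; ext x
        simp only [h_fst, h_snd, integral_const_mul, integral_signedInd_gaussianReal]

end GaussianPair

section SignedIndicatorCorrelation

lemma abs_inv_sqrt_sub_one_le {a : ℝ} (ha : 1 / 2 ≤ a) : |(√a)⁻¹ - 1| ≤ |a - 1| := by
  have h_half : 1 / 2 ≤ √a := Real.le_sqrt_of_sq_le (by linarith)
  have h_sq : √a * √a = a := Real.mul_self_sqrt (by linarith)
  have h_eq : (√a)⁻¹ - 1 = (1 - a) * (√a * (1 + √a))⁻¹ := by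
    field_simp
    linear_combination -h_sq
  rw [h_eq, abs_mul, abs_sub_comm, abs_of_pos (a := (√a * (1 + √a))⁻¹) (by positivity)]
  exact mul_le_of_le_one_right (abs_nonneg _) (inv_le_one_of_one_le₀ (by linarith))

lemma abs_integral_signedInd_mul_gaussTail_sub_le {p : ℝ} (hp : p ∈ Set.Icc (0 : ℝ) 1)
    (u v m κ : ℝ) :
    |∫ x, signedInd p u x * (gaussTail (m - κ * x) - p) ∂γ
      - ((gaussTail v - p - φ v * (m - v)) * (gaussTail u - p) + φ v * κ * φ u)|
      ≤ 2 * (m - v) ^ 2 + 2 * κ ^ 2 := by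
  have h_int₀ : Integrable (signedInd p u) γ := by
    simpa using integrable_signedInd_comp_mul p u measurable_id (integrable_const (μ := γ) 1)
  have h_int₁ : Integrable (fun x => signedInd p u x * x) γ :=
    integrable_signedInd_comp_mul p u measurable_id integrable_id_gaussianReal
  have h_tail : Integrable (fun x => gaussTail (m - κ * x) - p) γ := by
    refine Integrable.of_bound (C := 1) ?_ (ae_of_all _ fun x => ?_)
    · exact Continuous.aestronglyMeasurable
        ((continuous_gaussTail.comp (by fun_prop : Continuous fun x => m - κ * x)).sub
          continuous_const)
    · obtain ⟨h₀, h₁⟩ := gaussTail_mem_Icc (m - κ * x)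
      exact abs_le.2 ⟨by linarith [hp.2], by linarith [hp.1]⟩
  have h_lin : ∫ x, ((gaussTail v - p - φ v * (m - v)) * signedInd p u x
      + φ v * κ * (signedInd p u x * x)) ∂γ
      = (gaussTail v - p - φ v * (m - v)) * (gaussTail u - p) + φ v * κ * φ u := by
    rw [integral_add (h_int₀.const_mul _) (h_int₁.const_mul _), integral_const_mul,
      integral_const_mul, integral_signedInd_gaussianReal, integral_signedInd_mul_id_gaussianReal]
  have h_bound : ∫ x, (2 * (m - v) ^ 2 + 2 * κ ^ 2 * x ^ 2) ∂γ = 2 * (m - v) ^ 2 + 2 * κ ^ 2 := by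
    rw [integral_add (integrable_const _) ((integrable_pow_gaussianReal 2).const_mul _),
      integral_const_mul (2 * κ ^ 2), integral_sq_gaussianReal]
    simp
  have h_int_lin : Integrable (fun x => (gaussTail v - p - φ v * (m - v)) * signedInd p u x
      + φ v * κ * (signedInd p u x * x)) γ := (h_int₀.const_mul _).add (h_int₁.const_mul _)
  have h_int_tail : Integrable (fun x => signedInd p u x * (gaussTail (m - κ * x) - p)) γ :=
    integrable_signedInd_comp_mul p u measurable_id h_tail
  rw [← h_lin, ← integral_sub h_int_tail h_int_lin, ← h_bound, ← Real.norm_eq_abs]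
  refine norm_integral_le_of_norm_le
    ((integrable_const _).add ((integrable_pow_gaussianReal 2).const_mul _))
    (ae_of_all _ fun x => ?_)
  calc |signedInd p u x * (gaussTail (m - κ * x) - p)
        - ((gaussTail v - p - φ v * (m - v)) * signedInd p u x
          + φ v * κ * (signedInd p u x * x))|
      = |signedInd p u x|
        * |gaussTail (m - κ * x) - gaussTail v + φ v * (m - κ * x - v)| := by
        rw [← abs_mul]; congr 1; ring
    _ ≤ 1 * (m - κ * x - v) ^ 2 :=
        mul_le_mul (abs_signedInd_le_one hp u x) (abs_gaussTail_taylor_le _ v) (abs_nonneg _)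
          zero_le_one
    _ ≤ 2 * (m - v) ^ 2 + 2 * κ ^ 2 * x ^ 2 := by nlinarith [sq_nonneg (m - v + κ * x)]

lemma abs_mul_sub_self_le {v s e : ℝ} (hs : |s - 1| ≤ e) : |v * s - v| ≤ |v| * e := by
  rw [← mul_sub_one, abs_mul]
  gcongr

lemma abs_mul_mul_sub_self_le {c r q e : ℝ} (he : e ≤ 1 / 4) (hr : |r - 1| ≤ e)
    (hq : |q - 1| ≤ e) (hc : |c| ≤ e) : |c * r * q - c| ≤ 9 / 4 * e ^ 2 := by
  have he₀ : 0 ≤ e := (abs_nonneg _).trans hc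
  have h_rq : |r * q - 1| ≤ 9 / 4 * e := by
    calc |r * q - 1| = |(r - 1) * (q - 1) + (r - 1) + (q - 1)| := by ring_nf
      _ ≤ |r - 1| * |q - 1| + |r - 1| + |q - 1| := by
          rw [← abs_mul]; exact abs_add_three _ _ _
      _ ≤ e * (1 / 4) + e + e := by gcongr; exact hq.trans he
      _ = 9 / 4 * e := by ring
  calc |c * r * q - c| = |c| * |r * q - 1| := by rw [← abs_mul]; ring_nf
    _ ≤ e * (9 / 4 * e) := by gcongr
    _ = 9 / 4 * e ^ 2 := by ring

lemma abs_density_mul_slope_sub_le {v c r κ e : ℝ} (hr : |r - 1| ≤ e) (hc : |c| ≤ e)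
    (hκ : |κ - c| ≤ 9 / 4 * e ^ 2) :
    |φ v * κ * φ (v * r) - φ v ^ 2 * c| ≤ 9 / 4 * e ^ 2 + |v| * e ^ 2 := by
  calc |φ v * κ * φ (v * r) - φ v ^ 2 * c|
      = |φ v| * |(κ - c) * φ (v * r) + c * (φ (v * r) - φ v)| := by
        rw [← abs_mul]; ring_nf
    _ ≤ 1 * (|κ - c| * 1 + |c| * |φ (v * r) - φ v|) := by
        gcongr
        · exact abs_gaussianPDFReal_zero_one_le_one v
        · refine (abs_add_le _ _).trans ?_
          rw [abs_mul, abs_mul]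
          gcongr
          exact abs_gaussianPDFReal_zero_one_le_one _
    _ ≤ 1 * (9 / 4 * e ^ 2 * 1 + e * (|v| * e)) := by
        gcongr
        · exact (abs_nonneg _).trans hc
        · exact (abs_gaussianPDFReal_zero_one_sub_le _ _).trans (abs_mul_sub_self_le hr)
    _ = 9 / 4 * e ^ 2 + |v| * e ^ 2 := by ring

lemma abs_gaussTail_correlation_sub_le {p v c r q e : ℝ} (he : e ≤ 1 / 4) (hr : |r - 1| ≤ e)
    (hq : |q - 1| ≤ e) (hc : |c| ≤ e) (hp : |gaussTail v - p| ≤ e) :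
    |(gaussTail v - p - φ v * (v * q - v)) * (gaussTail (v * r) - p)
      + φ v * (c * r * q) * φ (v * r) - φ v ^ 2 * c|
      + (2 * (v * q - v) ^ 2 + 2 * (c * r * q) ^ 2) ≤ 10 * (1 + |v|) ^ 2 * e ^ 2 := by
  have he₀ : 0 ≤ e := (abs_nonneg _).trans hc
  have h_slope : |c * r * q - c| ≤ 9 / 4 * e ^ 2 := abs_mul_mul_sub_self_le he hr hq hc
  have h_prod : |(gaussTail v - p - φ v * (v * q - v)) * (gaussTail (v * r) - p)|
      ≤ (e + |v| * e) * (e + |v| * e) := by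
    rw [abs_mul]
    gcongr
    · refine (abs_sub _ _).trans (add_le_add hp ?_)
      rw [abs_mul]
      exact (mul_le_of_le_one_left (abs_nonneg _) (abs_gaussianPDFReal_zero_one_le_one v)).trans
        (abs_mul_sub_self_le hq)
    · calc |gaussTail (v * r) - p|
          ≤ |gaussTail (v * r) - gaussTail v| + |gaussTail v - p| := abs_sub_le _ _ _
        _ ≤ |v * r - v| + e := add_le_add (abs_gaussTail_sub_le _ _) hp
        _ ≤ e + |v| * e := by linarith [abs_mul_sub_self_le (v := v) hr]
  have h_shift_sq : (v * q - v) ^ 2 ≤ (|v| * e) ^ 2 :=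
    sq_le_sq' (neg_le_of_abs_le (abs_mul_sub_self_le hq)) (le_of_abs_le (abs_mul_sub_self_le hq))
  have h_slope_sq : (c * r * q) ^ 2 ≤ (25 / 16 * e) ^ 2 := by
    refine sq_le_sq' ?_ ?_ <;> nlinarith [abs_le.1 h_slope, abs_le.1 hc]
  rw [add_sub_assoc]
  calc _ ≤ (e + |v| * e) * (e + |v| * e) + (9 / 4 * e ^ 2 + |v| * e ^ 2)
        + (2 * (|v| * e) ^ 2 + 2 * (25 / 16 * e) ^ 2) := by
        refine add_le_add ((abs_add_le _ _).trans (add_le_add h_prod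
          (abs_density_mul_slope_sub_le hr hc h_slope))) ?_
        gcongr 2 * ?_ + 2 * ?_
    _ ≤ 10 * (1 + |v|) ^ 2 * e ^ 2 := by
        have : 0 ≤ |v| * e ^ 2 := by positivity
        have : 0 ≤ |v| ^ 2 * e ^ 2 := by positivity
        linarith [sq_nonneg e]

variable {Ω : Type*} [MeasurableSpace Ω] {P : Measure Ω} {U V : Ω → ℝ}

lemma abs_integral_signedInd_mul_signedInd_sub_le_of_le
    (hUV : HasGaussianLaw (fun ω => (U ω, V ω)) P) (hU₀ : P[U] = 0) (hV₀ : P[V] = 0)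
    {p : ℝ} (hp : p ∈ Set.Icc (0 : ℝ) 1) {v e : ℝ} (he : e ≤ 1 / 4)
    (h_le : |Var[U; P] - 1| + |Var[V; P] - 1| + |cov[U, V; P]| + |gaussTail v - p| ≤ e) :
    |∫ ω, signedInd p v (U ω) * signedInd p v (V ω) ∂P - φ v ^ 2 * cov[U, V; P]|
      ≤ 10 * (1 + |v|) ^ 2 * e ^ 2 := by
  have : IsProbabilityMeasure P := hUV.isProbabilityMeasure
  set a := Var[U; P]
  set b := Var[V; P]
  set c := cov[U, V; P]
  have h_nonneg := And.intro (And.intro (abs_nonneg (a - 1)) (abs_nonneg (b - 1)))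
    (And.intro (abs_nonneg c) (abs_nonneg (gaussTail v - p)))
  have ha : 3 / 4 ≤ a := by linarith [neg_abs_le (a - 1)]
  have hW : Var[regResidual U V P; P] = b - c ^ 2 / a :=
    variance_residual hUV.fst.memLp_two hUV.snd.memLp_two (by linarith)
  have h_ratio : |c ^ 2 / a| ≤ |c| := by
    rw [abs_div, abs_pow, abs_of_pos (a := a) (by linarith), div_le_iff₀ (by linarith)]
    nlinarith
  have hw : |b - c ^ 2 / a - 1| ≤ |b - 1| + |c| := by
    rw [sub_right_comm]
    exact (abs_sub _ _).trans (by gcongr)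
  have hw_half : 1 / 2 ≤ b - c ^ 2 / a := by linarith [neg_abs_le (b - c ^ 2 / a - 1)]
  set r := (√a)⁻¹
  set q := (√(b - c ^ 2 / a))⁻¹
  have h_int : ∫ ω, signedInd p v (U ω) * signedInd p v (V ω) ∂P
      = ∫ x, signedInd p (v * r) x * (gaussTail (v * q - c * r * q * x) - p) ∂γ := by
    rw [integral_signedInd_mul_signedInd_of_hasGaussianLaw hUV hU₀ hV₀
      (ha.trans_lt' (by norm_num)) (by rw [hW]; linarith), hW]
    congr with x
    have h_arg : (v - c / √a * x) / √(b - c ^ 2 / a) = v * q - c * r * q * x := by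
      simp only [r, q, div_eq_mul_inv]
      ring
    rw [← h_arg]
    rfl
  have h_corr := abs_gaussTail_correlation_sub_le (p := p) (v := v) (c := c) he
    ((abs_inv_sqrt_sub_one_le (by linarith)).trans (by linarith) : |r - 1| ≤ e)
    ((abs_inv_sqrt_sub_one_le hw_half).trans (by linarith) : |q - 1| ≤ e)
    (by linarith) (by linarith)
  have h_taylor := abs_integral_signedInd_mul_gaussTail_sub_le hp (v * r) v (v * q) (c * r * q)
  rw [h_int]
  exact (abs_sub_le _ ((gaussTail v - p - φ v * (v * q - v)) * (gaussTail (v * r) - p)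
    + φ v * (c * r * q) * φ (v * r)) _).trans (by linarith)

lemma abs_integral_signedInd_mul_signedInd_sub_le
    (hUV : HasGaussianLaw (fun ω => (U ω, V ω)) P) (hU₀ : P[U] = 0) (hV₀ : P[V] = 0)
    {p : ℝ} (hp : p ∈ Set.Icc (0 : ℝ) 1) (v : ℝ) :
    |∫ ω, signedInd p v (U ω) * signedInd p v (V ω) ∂P - φ v ^ 2 * cov[U, V; P]|
      ≤ 20 * (1 + |v|) ^ 2
        * (|Var[U; P] - 1| + |Var[V; P] - 1| + |cov[U, V; P]| + |gaussTail v - p|) ^ 2 := by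
  have : IsProbabilityMeasure P := hUV.isProbabilityMeasure
  set e := |Var[U; P] - 1| + |Var[V; P] - 1| + |cov[U, V; P]| + |gaussTail v - p|
  obtain he | he := le_total e (1 / 4)
  · refine (abs_integral_signedInd_mul_signedInd_sub_le_of_le hUV hU₀ hV₀ hp he le_rfl).trans ?_
    gcongr
    norm_num
  · have h_int : |∫ ω, signedInd p v (U ω) * signedInd p v (V ω) ∂P| ≤ 1 := by
      simpa using norm_integral_le_of_norm_le_const (μ := P) (C := 1)
        (f := fun ω => signedInd p v (U ω) * signedInd p v (V ω)) (ae_of_all _ fun ω => by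
          rw [norm_mul]
          exact mul_le_one₀ (abs_signedInd_le_one hp v _) (norm_nonneg _)
            (abs_signedInd_le_one hp v _))
    have h_cov : |φ v ^ 2 * cov[U, V; P]| ≤ e := by
      rw [abs_mul, abs_pow]
      refine (mul_le_of_le_one_left (abs_nonneg _) (pow_le_one₀ (abs_nonneg _)
        (abs_gaussianPDFReal_zero_one_le_one v))).trans ?_
      linarith [abs_nonneg (Var[U; P] - 1), abs_nonneg (Var[V; P] - 1),
        abs_nonneg (gaussTail v - p)]
    calc _ ≤ 1 + e := (abs_sub _ _).trans (add_le_add h_int h_cov)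
      _ ≤ 20 * 1 * e ^ 2 := by nlinarith
      _ ≤ _ := by
        gcongr
        exact one_le_pow₀ (by linarith [abs_nonneg v])

end SignedIndicatorCorrelation

section DiagonalGaussian

variable {d : ℕ}

lemma dotp_comm (x y : Fin d → ℝ) : dotp x y = dotp y x := by
  simp only [dotp, mul_comm]

lemma dotp_mul_left (w x y : Fin d → ℝ) : dotp (w * x) y = dotp x (w * y) := by
  simp only [dotp, Pi.mul_apply]
  exact Finset.sum_congr rfl fun i _ => by ring

lemma dotp_mul_self_nonneg {w : Fin d → ℝ} (hw : ∀ i, 0 ≤ w i) (y : Fin d → ℝ) :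
    0 ≤ dotp (w * y) y :=
  Finset.sum_nonneg fun i _ => by
    rw [Pi.mul_apply, mul_assoc]
    exact mul_nonneg (hw i) (mul_self_nonneg _)

lemma measurable_dotp {Ω : Type*} [MeasurableSpace Ω] {f g : Ω → Fin d → ℝ} (hf : Measurable f)
    (hg : Measurable g) : Measurable fun ω => dotp (f ω) (g ω) := by
  unfold dotp
  fun_prop

lemma integral_sq_gaussianReal_toNNReal {a : ℝ} (ha : 0 ≤ a) :
    ∫ x, x ^ 2 ∂(gaussianReal 0 a.toNNReal) = a := by
  have h := variance_fun_id_gaussianReal (μ := 0) (v := a.toNNReal)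
  rwa [variance_of_integral_eq_zero (by fun_prop) integral_id_gaussianReal,
    Real.coe_toNNReal a ha] at h

lemma memLp_sq_gaussianReal (v : ℝ≥0) : MemLp (fun x : ℝ => x ^ 2) 2 (gaussianReal 0 v) := by
  rw [memLp_two_iff_integrable_sq (by fun_prop)]
  refine (memLp_id_gaussianReal (4 : ℝ≥0)).integrable_norm_pow'.mono' (by fun_prop)
    (ae_of_all _ fun x => ?_)
  simp [← pow_mul]

lemma variance_sq_gaussianReal {a : ℝ} (ha : 0 ≤ a) :
    Var[fun x => x ^ 2; gaussianReal 0 a.toNNReal] = 2 * a ^ 2 := by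
  have h_four : ∫ x, (x ^ 2) ^ 2 ∂(gaussianReal 0 a.toNNReal) = 3 * a ^ 2 := by
    have h_sqrt : √a ^ 4 = a ^ 2 := by rw [show 4 = 2 * 2 from rfl, pow_mul, Real.sq_sqrt ha]
    rw [gaussianReal_zero_eq_map_sqrt_mul, integral_map (by fun_prop) (by fun_prop)]
    simp only [← pow_mul, Nat.reduceMul, mul_pow]
    rw [integral_const_mul, integral_pow_four_gaussianReal, h_sqrt, mul_comm]
  rw [variance_eq_sub (memLp_sq_gaussianReal _)]
  simp only [Pi.pow_apply]
  rw [h_four, integral_sq_gaussianReal_toNNReal ha]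
  ring

instance (α : Fin d → ℝ) : IsProbabilityMeasure (gaussPi d α) := by
  unfold gaussPi
  infer_instance

lemma measurePreserving_eval_gaussPi (α : Fin d → ℝ) (i : Fin d) :
    MeasurePreserving (fun x => x i) (gaussPi d α) (gaussianReal 0 (α i).toNNReal) :=
  measurePreserving_eval (fun i => gaussianReal 0 (α i).toNNReal) i

lemma integral_comp_eval_gaussPi (α : Fin d → ℝ) (i : Fin d) {f : ℝ → ℝ} (hf : Measurable f) :
    ∫ x, f (x i) ∂(gaussPi d α) = ∫ r, f r ∂(gaussianReal 0 (α i).toNNReal) :=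
  integral_comp_eval (μ := fun i => gaussianReal 0 (α i).toNNReal) hf.aestronglyMeasurable

lemma iIndepFun_eval_gaussPi (α : Fin d → ℝ) :
    iIndepFun (fun i (x : Fin d → ℝ) => x i) (gaussPi d α) :=
  iIndepFun_pi (X := fun _ x => x) fun _ => aemeasurable_id

lemma hasGaussianLaw_eval_gaussPi (α : Fin d → ℝ) (i : Fin d) :
    HasGaussianLaw (fun x => x i) (gaussPi d α) where
  isGaussian_map := by
    rw [(measurePreserving_eval_gaussPi α i).map_eq]
    infer_instance

lemma hasGaussianLaw_dotp_prodMk (α y z : Fin d → ℝ) :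
    HasGaussianLaw (fun x => (dotp x y, dotp x z)) (gaussPi d α) := by
  have h_law := (iIndepFun_eval_gaussPi α).hasGaussianLaw (hasGaussianLaw_eval_gaussPi α)
  let dotpL (y : Fin d → ℝ) : (Fin d → ℝ) →L[ℝ] ℝ := ∑ i, y i • ContinuousLinearMap.proj i
  have h_dotpL (y x : Fin d → ℝ) : dotpL y x = dotp x y := by
    simp [dotpL, dotp, mul_comm]
  simpa only [ContinuousLinearMap.prod_apply, h_dotpL] using
    h_law.map_fun ((dotpL y).prod (dotpL z))

lemma integral_dotp_gaussPi (α y : Fin d → ℝ) : ∫ x, dotp x y ∂(gaussPi d α) = 0 := by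
  simp only [dotp]
  rw [integral_finsetSum _ fun i _ => (hasGaussianLaw_eval_gaussPi α i).integrable.mul_const _]
  refine Finset.sum_eq_zero fun i _ => ?_
  rw [integral_mul_const, integral_comp_eval_gaussPi α i measurable_id', integral_id_gaussianReal,
    zero_mul]

lemma covariance_eval_gaussPi {α : Fin d → ℝ} (hα : ∀ i, 0 ≤ α i) (i j : Fin d) :
    cov[fun x => x i, fun x => x j; gaussPi d α] = if i = j then α i else 0 := by
  split_ifs with h
  · subst h
    rw [covariance_self (measurable_pi_apply i).aemeasurable,
      (measurePreserving_eval_gaussPi α i).variance_fun_comp aemeasurable_id',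
      variance_fun_id_gaussianReal, Real.coe_toNNReal _ (hα i)]
  · exact ((iIndepFun_eval_gaussPi α).indepFun h).covariance_eq_zero
      (hasGaussianLaw_eval_gaussPi α i).memLp_two (hasGaussianLaw_eval_gaussPi α j).memLp_two

lemma covariance_dotp_gaussPi {α : Fin d → ℝ} (hα : ∀ i, 0 ≤ α i) (y z : Fin d → ℝ) :
    cov[fun x => dotp x y, fun x => dotp x z; gaussPi d α] = dotp (α * y) z := by
  have h_memLp (i : Fin d) (c : ℝ) : MemLp (fun x : Fin d → ℝ => x i * c) 2 (gaussPi d α) :=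
    (hasGaussianLaw_eval_gaussPi α i).memLp_two.mul_const c
  simp only [dotp]
  rw [covariance_fun_sum_fun_sum (fun i => h_memLp i _) (fun i => h_memLp i _)]
  simp only [covariance_mul_const_left, covariance_mul_const_right, covariance_eval_gaussPi hα,
    ite_mul, zero_mul, Finset.sum_ite_eq, Finset.mem_univ, if_true, Pi.mul_apply]

lemma variance_dotp_gaussPi {α : Fin d → ℝ} (hα : ∀ i, 0 ≤ α i) (y : Fin d → ℝ) :
    Var[fun x => dotp x y; gaussPi d α] = dotp (α * y) y := by
  rw [← covariance_dotp_gaussPi hα, covariance_self]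
  exact (hasGaussianLaw_dotp_prodMk α y y).fst.aemeasurable

lemma integral_dotp_sq_gaussPi {α : Fin d → ℝ} (hα : ∀ i, 0 ≤ α i) (y : Fin d → ℝ) :
    ∫ x, dotp x y ^ 2 ∂(gaussPi d α) = dotp (α * y) y := by
  rw [← variance_dotp_gaussPi hα, variance_of_integral_eq_zero
    (hasGaussianLaw_dotp_prodMk α y y).fst.aemeasurable (integral_dotp_gaussPi α y)]

lemma memLp_const_mul_sq_eval_gaussPi (α : Fin d → ℝ) (c : ℝ) (i : Fin d) :
    MemLp (fun x => c * x i ^ 2) 2 (gaussPi d α) :=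
  ((memLp_sq_gaussianReal _).comp_measurePreserving
    (measurePreserving_eval_gaussPi α i)).const_mul c

lemma dotp_mul_self_eq_sum (w y : Fin d → ℝ) : dotp (w * y) y = ∑ i, w i * y i ^ 2 := by
  simp only [dotp, Pi.mul_apply, sq, mul_assoc]

lemma memLp_dotp_mul_self_gaussPi (α w : Fin d → ℝ) :
    MemLp (fun y => dotp (w * y) y) 2 (gaussPi d α) := by
  simp only [dotp_mul_self_eq_sum]
  exact memLp_finsetSum _ fun i _ => memLp_const_mul_sq_eval_gaussPi α (w i) i

lemma integral_dotp_mul_self_gaussPi {α : Fin d → ℝ} (hα : ∀ i, 0 ≤ α i) (w : Fin d → ℝ) :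
    ∫ y, dotp (w * y) y ∂(gaussPi d α) = dotp w α := by
  simp only [dotp_mul_self_eq_sum]
  rw [integral_finsetSum _ fun i _ =>
    (memLp_const_mul_sq_eval_gaussPi α (w i) i).integrable one_le_two, dotp]
  refine Finset.sum_congr rfl fun i _ => ?_
  rw [integral_const_mul, integral_comp_eval_gaussPi α i (f := (· ^ 2)) (by fun_prop),
    integral_sq_gaussianReal_toNNReal (hα i)]

lemma variance_dotp_mul_self_gaussPi {α : Fin d → ℝ} (hα : ∀ i, 0 ≤ α i) (w : Fin d → ℝ) :
    Var[fun y => dotp (w * y) y; gaussPi d α] = 2 * ∑ i, (w i * α i) ^ 2 := by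
  have h_sum : (fun y => dotp (w * y) y) = ∑ i, fun y : Fin d → ℝ => w i * y i ^ 2 := by
    ext y
    simp only [dotp_mul_self_eq_sum, Finset.sum_apply]
  rw [h_sum, gaussPi, variance_sum_pi (X := fun i (x : ℝ) => w i * x ^ 2)
    fun i => (memLp_sq_gaussianReal _).const_mul (w i), Finset.mul_sum]
  refine Finset.sum_congr rfl fun i _ => ?_
  rw [variance_const_mul, variance_sq_gaussianReal (hα i)]
  ring

lemma memLp_dotp_mul_gaussPi_prod (α w : Fin d → ℝ) :
    MemLp (fun q => dotp (w * q.1) q.2) 2 ((gaussPi d α).prod (gaussPi d α)) := by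
  simp only [dotp, Pi.mul_apply, mul_assoc]
  refine memLp_finsetSum _ fun i _ => MemLp.const_mul ?_ _
  rw [memLp_two_iff_integrable_sq (by fun_prop)]
  simp only [mul_pow]
  have h_sq := (hasGaussianLaw_eval_gaussPi α i).memLp_two.integrable_sq
  exact h_sq.mul_prod h_sq

lemma integral_dotp_mul_sq_gaussPi_prod {α : Fin d → ℝ} (hα : ∀ i, 0 ≤ α i) (w : Fin d → ℝ) :
    ∫ q, dotp (w * q.1) q.2 ^ 2 ∂((gaussPi d α).prod (gaussPi d α)) = ∑ i, (w i * α i) ^ 2 := by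
  have h_inner (y : Fin d → ℝ) :
      ∫ z, dotp (w * y) z ^ 2 ∂(gaussPi d α) = dotp (w ^ 2 * α * y) y := by
    simp only [dotp_comm (w * y), integral_dotp_sq_gaussPi hα]
    simp only [dotp, Pi.mul_apply, Pi.pow_apply]
    exact Finset.sum_congr rfl fun i _ => by ring
  rw [integral_prod _ (memLp_dotp_mul_gaussPi_prod α w).integrable_sq]
  simp only [h_inner, integral_dotp_mul_self_gaussPi hα]
  simp only [dotp, Pi.mul_apply, Pi.pow_apply]
  exact Finset.sum_congr rfl fun i _ => by ring

end DiagonalGaussian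

section Threshold

variable {Ω : Type*} [MeasurableSpace Ω] {P : Measure Ω} {U : Ω → ℝ}

lemma abs_measureReal_sub_gaussTail_le (hU : HasGaussianLaw U P) (hU₀ : P[U] = 0)
    (hU_meas : Measurable U) (u : ℝ) :
    |P.real {ω | u ≤ U ω} - gaussTail u| ≤ 2 * (1 + |u|) * |Var[U; P] - 1| := by
  have : IsProbabilityMeasure P := hU.isProbabilityMeasure
  obtain h_far | h_near := le_total (1 / 2) |Var[U; P] - 1|
  · obtain ⟨h₀, h₁⟩ := gaussTail_mem_Icc u
    calc |P.real {ω | u ≤ U ω} - gaussTail u| ≤ 1 := abs_le.2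
          ⟨by linarith [measureReal_nonneg (μ := P) (s := {ω | u ≤ U ω})],
            by linarith [measureReal_le_one (μ := P) (s := {ω | u ≤ U ω})]⟩
      _ ≤ 2 * (1 + |u|) * |Var[U; P] - 1| := by nlinarith [abs_nonneg u]
  · have h_half : 1 / 2 ≤ Var[U; P] := by linarith [neg_abs_le (Var[U; P] - 1)]
    have h_sqrt : 0 < √Var[U; P] := Real.sqrt_pos.2 (by linarith)
    have h_tail : P.real {ω | u ≤ U ω} = gaussTail (u * (√Var[U; P])⁻¹) := by
      calc P.real {ω | u ≤ U ω} = (P.map U).real (Set.Ici u) :=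
            (map_measureReal_apply hU_meas measurableSet_Ici).symm
        _ = (γ).real ((√Var[U; P] * ·) ⁻¹' Set.Ici u) := by
            rw [map_eq_map_sqrt_variance_mul hU hU₀,
              map_measureReal_apply (by fun_prop) measurableSet_Ici]
        _ = gaussTail (u * (√Var[U; P])⁻¹) := by
            rw [gaussTail, ← div_eq_mul_inv]
            congr 1
            ext x
            simp [div_le_iff₀' h_sqrt]
    calc |P.real {ω | u ≤ U ω} - gaussTail u|
        ≤ |u * (√Var[U; P])⁻¹ - u| := by rw [h_tail]; exact abs_gaussTail_sub_le _ _
      _ ≤ |u| * |Var[U; P] - 1| := abs_mul_sub_self_le (abs_inv_sqrt_sub_one_le h_half)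
      _ ≤ 2 * (1 + |u|) * |Var[U; P] - 1| := by gcongr; linarith [abs_nonneg u]

variable [IsProbabilityMeasure P]

lemma sq_mul_measureReal_mul_one_sub_le_integral_sq (hU : Measurable U)
    (hU₂ : Integrable (fun ω => U ω ^ 2) P) (u : ℝ) :
    u ^ 2 * (P.real {ω | u ≤ U ω} * (1 - P.real {ω | u ≤ U ω})) ≤ ∫ ω, U ω ^ 2 ∂P := by
  have h_markov : u ^ 2 * P.real {ω | u ^ 2 ≤ U ω ^ 2} ≤ ∫ ω, U ω ^ 2 ∂P :=
    mul_meas_ge_le_integral_of_nonneg (ae_of_all _ fun ω => sq_nonneg _) hU₂ _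
  have h_compl : 1 - P.real {ω | u ≤ U ω} = P.real {ω | u ≤ U ω}ᶜ :=
    (probReal_compl_eq_one_sub (measurableSet_le measurable_const hU)).symm
  refine (mul_le_mul_of_nonneg_left ?_ (sq_nonneg u)).trans h_markov
  obtain hu | hu := le_total 0 u
  · refine (mul_le_of_le_one_right measureReal_nonneg ?_).trans (measureReal_mono ?_)
    · rw [h_compl]
      exact measureReal_le_one
    · exact fun ω (hω : u ≤ U ω) => pow_le_pow_left₀ hu hω 2
  · rw [h_compl]
    refine (mul_le_of_le_one_left measureReal_nonneg measureReal_le_one).trans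
      (measureReal_mono fun ω hω => ?_)
    exact sq_le_sq.2 (abs_le_abs_of_nonpos hu (not_le.1 (show ¬u ≤ U ω from hω)).le)

lemma abs_le_inv_of_measureReal_eq {p : ℝ} (hp : p ∈ Set.Ioo (0 : ℝ) 1) (hU : Measurable U)
    (hU₂ : Integrable (fun ω => U ω ^ 2) P) (hU₁ : ∫ ω, U ω ^ 2 ∂P = 1) {u : ℝ}
    (hu : P.real {ω | u ≤ U ω} = p) : |u| ≤ (p * (1 - p))⁻¹ := by
  have h_var := sq_mul_measureReal_mul_one_sub_le_integral_sq hU hU₂ u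
  rw [hu, hU₁] at h_var
  have h_pos : 0 < p * (1 - p) := mul_pos hp.1 (sub_pos.2 hp.2)
  have h_le : p * (1 - p) ≤ 1 := by nlinarith [sq_nonneg p, hp.2]
  rw [← one_div, le_div_iff₀ h_pos]
  refine abs_le_one_iff_mul_self_le_one.2 ?_ |>.trans' (le_abs_self _)
  rw [mul_mul_mul_comm, abs_mul_abs_self]
  nlinarith

lemma sq_integral_le_integral_sq (hU : MemLp U 2 P) : P[U] ^ 2 ≤ ∫ ω, U ω ^ 2 ∂P := by
  simpa [variance_eq_sub hU] using variance_nonneg U P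

variable {d : ℕ} {α : Fin d → ℝ} {p t : ℝ}

lemma integral_dotp_mul_self_sub_one_sq (hα : ∀ i, 0 ≤ α i) (hα₂ : ∑ i, α i ^ 2 = 1) :
    ∫ y, (dotp (α * y) y - 1) ^ 2 ∂(gaussPi d α) = 2 * ∑ i, α i ^ 4 := by
  have h_mean : ∫ y, dotp (α * y) y ∂(gaussPi d α) = 1 := by
    rw [integral_dotp_mul_self_gaussPi hα, ← hα₂]
    simp only [dotp, sq]
  have h_var := variance_eq_integral (memLp_dotp_mul_self_gaussPi α α).aemeasurable
  rw [h_mean, variance_dotp_mul_self_gaussPi hα] at h_var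
  rw [← h_var]
  exact congrArg _ (Finset.sum_congr rfl fun i _ => by ring)

lemma integrable_dotp_mul_self_sub_one_sq (α : Fin d → ℝ) :
    Integrable (fun y => (dotp (α * y) y - 1) ^ 2) (gaussPi d α) :=
  ((memLp_dotp_mul_self_gaussPi α α).sub (memLp_const 1)).integrable_sq

lemma IsThreshold.measureReal_eq (ht : IsThreshold d α p t) (hp : 0 ≤ p) :
    ((gaussPi d α).prod (gaussPi d α)).real {xy | t ≤ dotp xy.1 xy.2} = p := by
  rw [Measure.real, ht, ENNReal.toReal_ofReal hp]

lemma abs_le_of_isThreshold (hα : ∀ i, 0 ≤ α i) (hα₂ : ∑ i, α i ^ 2 = 1)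
    (hp : p ∈ Set.Ioo (0 : ℝ) 1) (ht : IsThreshold d α p t) : |t| ≤ (p * (1 - p))⁻¹ := by
  have h_memLp := memLp_dotp_mul_gaussPi_prod α 1
  have h_sq := integral_dotp_mul_sq_gaussPi_prod hα 1
  simp only [one_mul, Pi.one_apply] at h_memLp h_sq
  exact abs_le_inv_of_measureReal_eq hp (measurable_dotp measurable_fst measurable_snd)
    h_memLp.integrable_sq (h_sq.trans hα₂) (ht.measureReal_eq hp.1.le)

lemma gaussTail_sub_sq_le_of_isThreshold (hα : ∀ i, 0 ≤ α i) (hα₂ : ∑ i, α i ^ 2 = 1)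
    (hp : 0 ≤ p) (ht : IsThreshold d α p t) :
    (gaussTail t - p) ^ 2 ≤ 8 * (1 + |t|) ^ 2 * ∑ i, α i ^ 4 := by
  set μ := gaussPi d α
  have h_memLp : MemLp (fun y => |dotp (α * y) y - 1|) 2 μ :=
    ((memLp_dotp_mul_self_gaussPi α α).sub (memLp_const 1)).norm
  have h_int : Integrable (fun q : (Fin d → ℝ) × (Fin d → ℝ) =>
      signedInd (gaussTail t) t (dotp q.1 q.2)) (μ.prod μ) := by
    simpa using integrable_signedInd_comp_mul (gaussTail t) t
      (measurable_dotp measurable_fst measurable_snd) (integrable_const (1 : ℝ))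
  have h_inner (x : Fin d → ℝ) :
      |∫ y, signedInd (gaussTail t) t (dotp x y) ∂μ|
        ≤ 2 * (1 + |t|) * |dotp (α * x) x - 1| := by
    have h_law := (hasGaussianLaw_dotp_prodMk α x x).fst
    have h_meas : Measurable fun y => dotp y x := measurable_dotp measurable_id measurable_const
    simp only [dotp_comm x]
    rw [integral_signedInd _ _ h_meas, ← variance_dotp_gaussPi hα]
    exact abs_measureReal_sub_gaussTail_le h_law (integral_dotp_gaussPi α x) h_meas t
  have h_abs : |p - gaussTail t| ≤ 2 * (1 + |t|) * ∫ x, |dotp (α * x) x - 1| ∂μ := by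
    rw [← ht.measureReal_eq hp, ← integral_signedInd _ _
      (measurable_dotp measurable_fst measurable_snd), integral_prod _ h_int,
      ← integral_const_mul, ← Real.norm_eq_abs]
    exact norm_integral_le_of_norm_le ((h_memLp.integrable one_le_two).const_mul _)
      (ae_of_all _ h_inner)
  have h_sq := sq_integral_le_integral_sq h_memLp
  simp only [sq_abs] at h_sq
  rw [integral_dotp_mul_self_sub_one_sq hα hα₂] at h_sq
  calc (gaussTail t - p) ^ 2 = |p - gaussTail t| ^ 2 := by rw [sq_abs]; ring
    _ ≤ (2 * (1 + |t|) * ∫ x, |dotp (α * x) x - 1| ∂μ) ^ 2 := by gcongr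
    _ = 4 * (1 + |t|) ^ 2 * (∫ x, |dotp (α * x) x - 1| ∂μ) ^ 2 := by ring
    _ ≤ 4 * (1 + |t|) ^ 2 * (2 * ∑ i, α i ^ 4) := by gcongr
    _ = 8 * (1 + |t|) ^ 2 * ∑ i, α i ^ 4 := by ring

end Threshold

section TriangleMean

variable {d : ℕ} {α : Fin d → ℝ} {p t : ℝ}

/-- The expected signed weight of one triangle: the mean of
`(A_{ij} - p) (A_{ik} - p) (A_{jk} - p)`, where the triple `q = ((q.1.1, q.1.2), q.2)` lists
`X_j`, `X_k`, `X_i`. -/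
def triangleMean (α : Fin d → ℝ) (p t : ℝ) : ℝ :=
  ∫ q, signedInd p t (dotp q.1.1 q.1.2) * (signedInd p t (dotp q.2 q.1.1)
    * signedInd p t (dotp q.2 q.1.2)) ∂(((gaussPi d α).prod (gaussPi d α)).prod (gaussPi d α))

lemma integrable_signedInd_dotp_mul {Ω : Type*} [MeasurableSpace Ω] {P : Measure Ω}
    {X Y : Ω → Fin d → ℝ} {f : Ω → ℝ} (hX : Measurable X) (hY : Measurable Y)
    (hf : Integrable f P) (p t : ℝ) :
    Integrable (fun ω => signedInd p t (dotp (X ω) (Y ω)) * f ω) P :=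
  integrable_signedInd_comp_mul p t (measurable_dotp hX hY) hf

lemma integrable_signedInd_triangle {Ω : Type*} [MeasurableSpace Ω] {P : Measure Ω}
    [IsFiniteMeasure P] {X Y Z : Ω → Fin d → ℝ} (hX : Measurable X) (hY : Measurable Y)
    (hZ : Measurable Z) (p t : ℝ) :
    Integrable (fun ω => signedInd p t (dotp (Y ω) (Z ω)) * (signedInd p t (dotp (X ω) (Y ω))
      * signedInd p t (dotp (X ω) (Z ω)))) P := by
  refine integrable_signedInd_dotp_mul hY hZ (integrable_signedInd_dotp_mul hX hY ?_ p t) p t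
  simpa using integrable_signedInd_dotp_mul hX hZ (integrable_const (1 : ℝ)) p t

lemma integrable_triangleMean_inner (α : Fin d → ℝ) (p t : ℝ) :
    Integrable (fun q : (Fin d → ℝ) × (Fin d → ℝ) => signedInd p t (dotp q.1 q.2) *
      ∫ x, signedInd p t (dotp x q.1) * signedInd p t (dotp x q.2) ∂(gaussPi d α))
      ((gaussPi d α).prod (gaussPi d α)) := by
  simpa only [Function.comp_apply, integral_const_mul] using (integrable_signedInd_triangle
    (P := ((gaussPi d α).prod (gaussPi d α)).prod (gaussPi d α)) measurable_snd
    (measurable_fst.comp measurable_fst) (measurable_snd.comp measurable_fst) p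
    t).integral_prod_left

lemma triangleMean_eq_integral (α : Fin d → ℝ) (p t : ℝ) :
    triangleMean α p t = ∫ q, signedInd p t (dotp q.1 q.2) * ∫ x, signedInd p t (dotp x q.1)
      * signedInd p t (dotp x q.2) ∂(gaussPi d α) ∂((gaussPi d α).prod (gaussPi d α)) := by
  rw [triangleMean, integral_prod _ (integrable_signedInd_triangle (by fun_prop) (by fun_prop)
    (by fun_prop) p t)]
  simp only [integral_const_mul]

/-- The squared distance from the identity of the covariance matrix of `(⟨x, y⟩, ⟨x, z⟩)` for
`x ∼ N(0, D_α)`, with the off-diagonal entry counted once. -/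
def covDeviation (α y z : Fin d → ℝ) : ℝ :=
  (dotp (α * y) y - 1) ^ 2 + (dotp (α * z) z - 1) ^ 2 + dotp (α * y) z ^ 2

lemma integrable_covDeviation (α : Fin d → ℝ) :
    Integrable (fun q => covDeviation α q.1 q.2) ((gaussPi d α).prod (gaussPi d α)) :=
  (((integrable_dotp_mul_self_sub_one_sq α).comp_fst _).add
    ((integrable_dotp_mul_self_sub_one_sq α).comp_snd _)).add
    (memLp_dotp_mul_gaussPi_prod α α).integrable_sq

lemma integral_covDeviation (hα : ∀ i, 0 ≤ α i) (hα₂ : ∑ i, α i ^ 2 = 1) :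
    ∫ q, covDeviation α q.1 q.2 ∂((gaussPi d α).prod (gaussPi d α)) = 5 * ∑ i, α i ^ 4 := by
  have h_fst := (integrable_dotp_mul_self_sub_one_sq α).comp_fst (gaussPi d α)
  have h_snd := (integrable_dotp_mul_self_sub_one_sq α).comp_snd (gaussPi d α)
  have h_sum : Integrable (fun q => (dotp (α * q.1) q.1 - 1) ^ 2 + (dotp (α * q.2) q.2 - 1) ^ 2)
      ((gaussPi d α).prod (gaussPi d α)) := h_fst.add h_snd
  have h_cov : ∑ i, (α i * α i) ^ 2 = ∑ i, α i ^ 4 := Finset.sum_congr rfl fun i _ => by ring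
  simp only [covDeviation]
  rw [integral_add h_sum (memLp_dotp_mul_gaussPi_prod α α).integrable_sq,
    integral_add h_fst h_snd, integral_fun_fst (fun y => (dotp (α * y) y - 1) ^ 2),
    integral_fun_snd (fun y => (dotp (α * y) y - 1) ^ 2),
    integral_dotp_mul_self_sub_one_sq hα hα₂, integral_dotp_mul_sq_gaussPi_prod hα, h_cov,
    probReal_univ, one_smul]
  ring

lemma abs_integral_signedInd_dotp_mul_sub_le (hα : ∀ i, 0 ≤ α i) (hp : p ∈ Set.Icc (0 : ℝ) 1)
    (t : ℝ) (y z : Fin d → ℝ) :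
    |∫ x, signedInd p t (dotp x y) * signedInd p t (dotp x z) ∂(gaussPi d α)
      - φ t ^ 2 * dotp (α * y) z|
      ≤ 80 * (1 + |t|) ^ 2 * (covDeviation α y z + (gaussTail t - p) ^ 2) := by
  have h := abs_integral_signedInd_mul_signedInd_sub_le (hasGaussianLaw_dotp_prodMk α y z)
    (integral_dotp_gaussPi α y) (integral_dotp_gaussPi α z) hp t
  rw [covariance_dotp_gaussPi hα, variance_dotp_gaussPi hα, variance_dotp_gaussPi hα] at h
  have h_sq (a b c e : ℝ) : (|a| + |b| + |c| + |e|) ^ 2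
      ≤ 4 * (a ^ 2 + b ^ 2 + c ^ 2 + e ^ 2) := by
    rw [← sq_abs a, ← sq_abs b, ← sq_abs c, ← sq_abs e]
    nlinarith [sq_nonneg (|a| - |b|), sq_nonneg (|a| - |c|), sq_nonneg (|a| - |e|),
      sq_nonneg (|b| - |c|), sq_nonneg (|b| - |e|), sq_nonneg (|c| - |e|)]
  calc _ ≤ _ := h
    _ ≤ 20 * (1 + |t|) ^ 2 * (4 * (covDeviation α y z + (gaussTail t - p) ^ 2)) := by
        gcongr
        exact h_sq _ _ _ _
    _ = _ := by ring

lemma abs_triangleMean_sub_le (hα : ∀ i, 0 ≤ α i) (hα₂ : ∑ i, α i ^ 2 = 1)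
    (hp : p ∈ Set.Icc (0 : ℝ) 1) (ht : IsThreshold d α p t) :
    |triangleMean α p t - φ t ^ 2 * ∫ q, signedInd p t (dotp q.1 q.2) * dotp (α * q.1) q.2
        ∂((gaussPi d α).prod (gaussPi d α))|
      ≤ 1040 * (1 + |t|) ^ 4 * ∑ i, α i ^ 4 := by
  have h_lin := (integrable_signedInd_dotp_mul measurable_fst measurable_snd
    ((memLp_dotp_mul_gaussPi_prod α α).integrable one_le_two) p t).const_mul (φ t ^ 2)
  have h_bound := (integrable_covDeviation α).add (integrable_const ((gaussTail t - p) ^ 2))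
  have h_L : 1 ≤ (1 + |t|) ^ 2 := one_le_pow₀ (by linarith [abs_nonneg t])
  rw [triangleMean_eq_integral, ← integral_const_mul,
    ← integral_sub (integrable_triangleMean_inner α p t) h_lin, ← Real.norm_eq_abs]
  refine (norm_integral_le_of_norm_le (h_bound.const_mul (80 * (1 + |t|) ^ 2))
    (ae_of_all _ fun q => ?_)).trans ?_
  · rw [← mul_left_comm, ← mul_sub, norm_mul]
    exact (mul_le_of_le_one_left (norm_nonneg _) (abs_signedInd_le_one hp t _)).trans
      (abs_integral_signedInd_dotp_mul_sub_le hα hp t q.1 q.2)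
  · rw [integral_const_mul, integral_add' (integrable_covDeviation α) (integrable_const _),
      integral_covDeviation hα hα₂, integral_const, probReal_univ, one_smul]
    calc _ ≤ 80 * (1 + |t|) ^ 2 * (5 * (1 + |t|) ^ 2 * ∑ i, α i ^ 4
          + 8 * (1 + |t|) ^ 2 * ∑ i, α i ^ 4) := by
          gcongr
          · exact le_mul_of_one_le_right (by norm_num) h_L
          · exact gaussTail_sub_sq_le_of_isThreshold hα hα₂ hp.1 ht
      _ = _ := by ring

lemma mul_eq_zero_of_dotp_mul_self_eq_zero (hα : ∀ i, 0 ≤ α i) {y : Fin d → ℝ}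
    (h : dotp (α * y) y = 0) : α * y = 0 := by
  rw [dotp_mul_self_eq_sum,
    Finset.sum_eq_zero_iff_of_nonneg fun i _ => mul_nonneg (hα i) (sq_nonneg _)] at h
  ext i
  simpa using h i (Finset.mem_univ i)

lemma integral_signedInd_dotp_mul (hα : ∀ i, 0 ≤ α i) (p t : ℝ) {y : Fin d → ℝ}
    (hy : 0 < dotp (α * y) y) :
    ∫ z, signedInd p t (dotp y z) * dotp (α * y) z ∂(gaussPi d α)
      = dotp (α ^ 2 * y) y / √(dotp (α * y) y) * φ (t / √(dotp (α * y) y)) := by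
  have h := integral_signedInd_mul_of_hasGaussianLaw (hasGaussianLaw_dotp_prodMk α y (α * y))
    (integral_dotp_gaussPi α y) (integral_dotp_gaussPi α _)
    (by rwa [variance_dotp_gaussPi hα]) p t
  rw [covariance_dotp_gaussPi hα, variance_dotp_gaussPi hα] at h
  have h_symm (z : Fin d → ℝ) : signedInd p t (dotp y z) * dotp (α * y) z
      = signedInd p t (dotp z y) * dotp z (α * y) := by rw [dotp_comm y, dotp_comm (α * y)]
  simp only [h_symm]
  rw [h, ← dotp_mul_left, ← mul_assoc, ← sq]

lemma le_integral_signedInd_dotp_mul (hα : ∀ i, 0 ≤ α i) (p t : ℝ) (y : Fin d → ℝ) :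
    φ (2 * t) / 2 * (dotp (α ^ 2 * y) y - 4 * (dotp (α ^ 2 * y) y * |dotp (α * y) y - 1|))
      ≤ ∫ z, signedInd p t (dotp y z) * dotp (α * y) z ∂(gaussPi d α) := by
  have h_sq : 0 ≤ dotp (α ^ 2 * y) y := dotp_mul_self_nonneg (fun i => sq_nonneg (α i)) y
  have h_half := half_pos (gaussianPDFReal_zero_one_pos (2 * t))
  rcases (dotp_mul_self_nonneg hα y).eq_or_lt with h_zero | h_pos
  · simp only [dotp_mul_left, sq, mul_assoc, mul_eq_zero_of_dotp_mul_self_eq_zero hα h_zero.symm]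
    simp [dotp]
  rw [integral_signedInd_dotp_mul hα p t h_pos]
  set a := dotp (α * y) y
  rcases le_total (1 / 4) |a - 1| with h_far | h_near
  · refine (mul_nonpos_of_nonneg_of_nonpos h_half.le ?_).trans
      (mul_nonneg (div_nonneg h_sq (Real.sqrt_nonneg a)) (gaussianPDFReal_zero_one_pos _).le)
    nlinarith
  have h_sqrt : 1 / 2 ≤ √a ∧ √a ≤ 2 := by
    have := abs_le.1 h_near
    exact ⟨Real.le_sqrt_of_sq_le (by linarith), Real.sqrt_le_iff.2 ⟨by norm_num, by linarith⟩⟩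
  have h_arg : |t / √a| ≤ |2 * t| := by
    rw [abs_div, abs_of_nonneg (Real.sqrt_nonneg a), abs_mul, abs_two, div_le_iff₀ (by linarith)]
    nlinarith [abs_nonneg t]
  calc _ ≤ φ (2 * t) / 2 * dotp (α ^ 2 * y) y := by
        gcongr
        exact sub_le_self _ (by positivity)
    _ = dotp (α ^ 2 * y) y / 2 * φ (2 * t) := by ring
    _ ≤ _ := by
        gcongr
        · exact (gaussianPDFReal_zero_one_pos _).le
        · exact h_sqrt.2
        · exact gaussianPDFReal_zero_one_le_of_abs_le h_arg


lemma integral_dotp_sq_mul_self_gaussPi (hα : ∀ i, 0 ≤ α i) :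
    ∫ y, dotp (α ^ 2 * y) y ∂(gaussPi d α) = ∑ i, α i ^ 3 := by
  rw [integral_dotp_mul_self_gaussPi hα, dotp]
  exact Finset.sum_congr rfl fun i _ => (pow_succ (α i) 2).symm

lemma integral_sq_dotp_sq_mul_self_gaussPi_le (hα : ∀ i, 0 ≤ α i) :
    ∫ y, dotp (α ^ 2 * y) y ^ 2 ∂(gaussPi d α) ≤ 3 * (∑ i, α i ^ 3) ^ 2 := by
  have h_sq : ∑ i, ((α ^ 2) i * α i) ^ 2 ≤ (∑ i, α i ^ 3) ^ 2 := by
    simp only [Pi.pow_apply, ← pow_succ]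
    exact Finset.sum_sq_le_sq_sum_of_nonneg fun i _ => pow_nonneg (hα i) 3
  have h_var := variance_eq_sub (memLp_dotp_mul_self_gaussPi α (α ^ 2))
  rw [variance_dotp_mul_self_gaussPi hα, integral_dotp_sq_mul_self_gaussPi hα] at h_var
  simp only [Pi.pow_apply (f := fun y => dotp (α ^ 2 * y) y)] at h_var
  linarith

lemma sum_pow_three_mem_Ioc (hα : ∀ i, 0 ≤ α i) (hα₂ : ∑ i, α i ^ 2 = 1) :
    ∑ i, α i ^ 3 ∈ Set.Ioc (0 : ℝ) 1 := by
  have h_le (i : Fin d) : α i ≤ 1 :=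
    (sq_le_one_iff₀ (hα i)).1 (hα₂ ▸ Finset.single_le_sum (f := fun i => α i ^ 2)
      (fun i _ => sq_nonneg (α i)) (Finset.mem_univ i))
  obtain ⟨i, hi, hi₀⟩ : ∃ i ∈ Finset.univ, α i ^ 2 ≠ 0 :=
    Finset.exists_ne_zero_of_sum_ne_zero (hα₂ ▸ one_ne_zero)
  refine ⟨Finset.sum_pos' (fun i _ => pow_nonneg (hα i) 3)
    ⟨i, hi, pow_pos ((hα i).lt_of_ne' (pow_ne_zero_iff two_ne_zero |>.1 hi₀)) 3⟩, ?_⟩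
  exact hα₂ ▸ Finset.sum_le_sum fun i _ =>
    pow_le_pow_of_le_one (hα i) (h_le i) (by norm_num)

lemma integral_dotp_sq_mul_self_mul_abs_le (hα : ∀ i, 0 ≤ α i) (hα₂ : ∑ i, α i ^ 2 = 1) :
    ∫ y, 4 * (dotp (α ^ 2 * y) y * |dotp (α * y) y - 1|) ∂(gaussPi d α)
      ≤ 1 / 4 * ∑ i, α i ^ 3 + 96 * ∑ i, α i ^ 4 := by
  obtain ⟨h_pos, h_le⟩ := sum_pow_three_mem_Ioc hα hα₂
  have h_R : 0 ≤ ∑ i, α i ^ 4 := Finset.sum_nonneg fun i _ => pow_nonneg (hα i) 4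
  set T := ∑ i, α i ^ 3
  have h_sq := (memLp_dotp_mul_self_gaussPi α (α ^ 2)).integrable_sq.const_mul (1 / (12 * T))
  have h_dev := (integrable_dotp_mul_self_sub_one_sq α).const_mul (48 * T)
  have h_amgm (b c : ℝ) : 4 * (b * |c|) ≤ 1 / (12 * T) * b ^ 2 + 48 * T * c ^ 2 := by
    rw [← sub_nonneg]
    calc 0 ≤ 1 / (12 * T) * (b - 24 * T * |c|) ^ 2 := by positivity
      _ = _ := by
        rw [← sq_abs c]
        field_simp
        ring
  calc ∫ y, 4 * (dotp (α ^ 2 * y) y * |dotp (α * y) y - 1|) ∂(gaussPi d α)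
      ≤ ∫ y, (1 / (12 * T) * dotp (α ^ 2 * y) y ^ 2 + 48 * T * (dotp (α * y) y - 1) ^ 2)
          ∂(gaussPi d α) :=
        integral_mono_of_nonneg (ae_of_all _ fun y => mul_nonneg zero_le_four (mul_nonneg
          (dotp_mul_self_nonneg (fun i => sq_nonneg (α i)) y) (abs_nonneg _)))
          (h_sq.add h_dev) (ae_of_all _ fun y => h_amgm _ _)
    _ ≤ 1 / (12 * T) * (3 * T ^ 2) + 48 * T * (2 * ∑ i, α i ^ 4) := by
        rw [integral_add h_sq h_dev, integral_const_mul, integral_const_mul,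
          integral_dotp_mul_self_sub_one_sq hα hα₂]
        gcongr
        exact integral_sq_dotp_sq_mul_self_gaussPi_le hα
    _ = 1 / 4 * T + 96 * (T * ∑ i, α i ^ 4) := by
        field_simp
        ring
    _ ≤ _ := by
        gcongr
        exact mul_le_of_le_one_left h_R h_le

lemma integrable_dotp_sq_mul_self_mul_abs (α : Fin d → ℝ) :
    Integrable (fun y => 4 * (dotp (α ^ 2 * y) y * |dotp (α * y) y - 1|)) (gaussPi d α) :=
  ((memLp_dotp_mul_self_gaussPi α (α ^ 2)).integrable_mul
    ((memLp_dotp_mul_self_gaussPi α α).sub (memLp_const 1)).norm).const_mul 4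

lemma le_integral_signedInd_dotp_mul_prod (hα : ∀ i, 0 ≤ α i) (hα₂ : ∑ i, α i ^ 2 = 1)
    (p t : ℝ) :
    φ (2 * t) / 2 * (3 / 4 * ∑ i, α i ^ 3 - 96 * ∑ i, α i ^ 4)
      ≤ ∫ q, signedInd p t (dotp q.1 q.2) * dotp (α * q.1) q.2
        ∂((gaussPi d α).prod (gaussPi d α)) := by
  have h_lin := integrable_signedInd_dotp_mul measurable_fst measurable_snd
    ((memLp_dotp_mul_gaussPi_prod α α).integrable one_le_two) p t
  have h_sq := (memLp_dotp_mul_self_gaussPi α (α ^ 2)).integrable one_le_two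
  have h_mul := integrable_dotp_sq_mul_self_mul_abs α
  have h_mean : 3 / 4 * ∑ i, α i ^ 3 - 96 * ∑ i, α i ^ 4 ≤ ∫ y, (dotp (α ^ 2 * y) y
      - 4 * (dotp (α ^ 2 * y) y * |dotp (α * y) y - 1|)) ∂(gaussPi d α) := by
    rw [integral_sub h_sq h_mul, integral_dotp_sq_mul_self_gaussPi hα]
    linarith [integral_dotp_sq_mul_self_mul_abs_le hα hα₂]
  calc _ ≤ _ := mul_le_mul_of_nonneg_left h_mean
        (half_pos (gaussianPDFReal_zero_one_pos (2 * t))).le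
    _ = ∫ y, φ (2 * t) / 2 * (dotp (α ^ 2 * y) y
          - 4 * (dotp (α ^ 2 * y) y * |dotp (α * y) y - 1|)) ∂(gaussPi d α) :=
        (integral_const_mul _ _).symm
    _ ≤ ∫ y, ∫ z, signedInd p t (dotp y z) * dotp (α * y) z ∂(gaussPi d α) ∂(gaussPi d α) :=
        integral_mono ((h_sq.sub h_mul).const_mul _) h_lin.integral_prod_left
          fun y => le_integral_signedInd_dotp_mul hα p t y
    _ = _ := (integral_prod _ h_lin).symm

theorem exists_le_triangleMean_of_sum_sq_eq_one {p : ℝ} (hp : p ∈ Set.Ioo (0 : ℝ) 1) :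
    ∃ δ > 0, ∃ C > 0, ∀ (d : ℕ) (α : Fin d → ℝ), (∀ i, 0 ≤ α i) → ∑ i, α i ^ 2 = 1 →
      ∀ t, IsThreshold d α p t → δ * ∑ i, α i ^ 3 - C * ∑ i, α i ^ 4 ≤ triangleMean α p t := by
  set K := (p * (1 - p))⁻¹
  have h_pos := gaussianPDFReal_zero_one_pos
  have hK : 0 ≤ K := (inv_pos.2 (mul_pos hp.1 (sub_pos.2 hp.2))).le
  refine ⟨3 / 8 * (φ K ^ 2 * φ (2 * K)), by have := h_pos K; have := h_pos (2 * K); positivity,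
    48 + 1040 * (1 + K) ^ 4, by positivity, fun d α hα hα₂ t ht => ?_⟩
  have h_t : |t| ≤ K := abs_le_of_isThreshold hα hα₂ hp ht
  have h_T := (sum_pow_three_mem_Ioc hα hα₂).1
  have h_R : 0 ≤ ∑ i, α i ^ 4 := Finset.sum_nonneg fun i _ => pow_nonneg (hα i) 4
  set T := ∑ i, α i ^ 3
  set R := ∑ i, α i ^ 4
  have h_approx := (abs_le.1 (abs_triangleMean_sub_le hα hα₂ (Set.Ioo_subset_Icc_self hp) ht)).1
  have h_main := mul_le_mul_of_nonneg_left (le_integral_signedInd_dotp_mul_prod hα hα₂ p t)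
    (sq_nonneg (φ t))
  have h_coef : φ t ^ 2 * φ (2 * t) ≤ 1 :=
    mul_le_one₀ (pow_le_one₀ (h_pos t).le (gaussianPDFReal_zero_one_le_one t)) (h_pos _).le
      (gaussianPDFReal_zero_one_le_one _)
  have h_K : φ K ^ 2 * φ (2 * K) * T ≤ φ t ^ 2 * φ (2 * t) * T := by
    have := (h_pos K).le
    gcongr
    · exact (h_pos _).le
    · exact gaussianPDFReal_zero_one_le_of_abs_le (by rwa [abs_of_nonneg hK])
    · refine gaussianPDFReal_zero_one_le_of_abs_le ?_
      rw [abs_mul, abs_mul, abs_of_nonneg hK]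
      gcongr
  have h_t_R : 1040 * (1 + |t|) ^ 4 * R ≤ 1040 * (1 + K) ^ 4 * R := by gcongr
  nlinarith [mul_le_mul_of_nonneg_right h_coef h_R]

end TriangleMean

section Norm

variable {d : ℕ} {α : Fin d → ℝ}

lemma nrm_nonneg (hα : ∀ i, 0 ≤ α i) (q : ℕ) : 0 ≤ nrm q α :=
  Real.rpow_nonneg (Finset.sum_nonneg fun i _ => pow_nonneg (hα i) q) _

lemma nrm_pos (hα : ∀ i, 0 ≤ α i) (hα₀ : α ≠ 0) (q : ℕ) : 0 < nrm q α := by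
  obtain ⟨i, hi⟩ := Function.ne_iff.1 hα₀
  exact Real.rpow_pos_of_pos (Finset.sum_pos' (fun i _ => pow_nonneg (hα i) q)
    ⟨i, Finset.mem_univ i, pow_pos ((hα i).lt_of_ne' hi) q⟩) _

lemma nrm_pow_self (hα : ∀ i, 0 ≤ α i) {q : ℕ} (hq : q ≠ 0) : nrm q α ^ q = ∑ i, α i ^ q := by
  rw [nrm, one_div, Real.rpow_inv_natCast_pow (Finset.sum_nonneg fun i _ => pow_nonneg (hα i) q) hq]

lemma nrm_four_div_pow_le_mul (hα : ∀ i, α i ∈ Set.Icc (0 : ℝ) 1)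
    {ε : ℝ} (hε : 0 < ε) (h₂ : ε⁻¹ ^ 2 < nrm 2 α ^ 2) :
    (nrm 4 α / nrm 2 α) ^ 4 ≤ ε * (nrm 3 α / nrm 2 α) ^ 3 := by
  have hα₀ (i : Fin d) : 0 ≤ α i := (hα i).1
  have h_nrm : ε⁻¹ < nrm 2 α := lt_of_pow_lt_pow_left₀ 2 (nrm_nonneg hα₀ 2) h₂
  have h_pos : 0 < nrm 2 α := (inv_pos.2 hε).trans h_nrm
  have h_pow : nrm 4 α ^ 4 ≤ nrm 3 α ^ 3 := by
    rw [nrm_pow_self hα₀ four_ne_zero, nrm_pow_self hα₀ three_ne_zero]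
    exact Finset.sum_le_sum fun i _ => pow_le_pow_of_le_one (hα₀ i) (hα i).2 (by norm_num)
  have h_nonneg := nrm_nonneg hα₀ 3
  calc (nrm 4 α / nrm 2 α) ^ 4 ≤ nrm 3 α ^ 3 / nrm 2 α ^ 4 := by
        rw [div_pow]
        gcongr
    _ = (nrm 2 α)⁻¹ * (nrm 3 α ^ 3 / nrm 2 α ^ 3) := by
        field_simp
    _ ≤ ε * (nrm 3 α / nrm 2 α) ^ 3 := by
        rw [div_pow]
        gcongr
        exact inv_le_of_inv_le₀ hε h_nrm.le

end Norm

section Scaling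

variable {d : ℕ} {α : Fin d → ℝ} {p t c : ℝ}

lemma dotp_sqrt_smul_sqrt_smul (hc : 0 ≤ c) (x y : Fin d → ℝ) :
    dotp (√c • x) (√c • y) = c * dotp x y := by
  simp only [dotp, Pi.smul_apply, smul_eq_mul, Finset.mul_sum]
  exact Finset.sum_congr rfl fun i _ => by rw [mul_mul_mul_comm, Real.mul_self_sqrt hc]

lemma measurePreserving_sqrt_smul_gaussPi (hc : 0 ≤ c) (α : Fin d → ℝ) :
    MeasurePreserving (fun x => √c • x) (gaussPi d α) (gaussPi d (c • α)) := by
  refine measurePreserving_pi (fun i => gaussianReal 0 (α i).toNNReal) _ fun i =>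
    ⟨measurable_const_mul _, ?_⟩
  change (gaussianReal 0 (α i).toNNReal).map (fun x => √c * x) = _
  rw [Pi.smul_apply, smul_eq_mul, Real.toNNReal_mul hc, gaussianReal_map_const_mul, mul_zero]
  congr 2
  ext
  simp [Real.sq_sqrt hc, hc]

lemma IsThreshold.smul (ht : IsThreshold d α p t) (hc : 0 < c) :
    IsThreshold d (c • α) p (c * t) := by
  have h_map := measurePreserving_sqrt_smul_gaussPi hc.le α
  rw [IsThreshold, ← (h_map.prod h_map).measure_preimage (measurableSet_le measurable_const
    (measurable_dotp measurable_fst measurable_snd)).nullMeasurableSet, ← ht]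
  congr 1
  ext q
  simp [dotp_sqrt_smul_sqrt_smul hc.le, hc]

lemma triangleMean_smul (hc : 0 < c) (α : Fin d → ℝ) (p t : ℝ) :
    triangleMean (c • α) p (c * t) = triangleMean α p t := by
  have h_map := measurePreserving_sqrt_smul_gaussPi hc.le α
  have h_map₃ := (h_map.prod h_map).prod h_map
  rw [triangleMean, ← h_map₃.map_eq, integral_map h_map₃.measurable.aemeasurable
    (integrable_signedInd_triangle (by fun_prop) (by fun_prop) (by fun_prop) p
      (c * t)).aestronglyMeasurable]
  simp only [Prod.map_fst, Prod.map_snd, dotp_sqrt_smul_sqrt_smul hc.le, signedInd_mul hc]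
  rfl

lemma sum_smul_pow_eq_nrm_div_pow (hα : ∀ i, 0 ≤ α i) (s : ℝ) {q : ℕ} (hq : q ≠ 0) :
    ∑ i, (s⁻¹ • α) i ^ q = (nrm q α / s) ^ q := by
  simp only [Pi.smul_apply, smul_eq_mul, mul_pow, ← Finset.mul_sum]
  rw [div_pow, nrm_pow_self hα hq, inv_pow, inv_mul_eq_div]

theorem exists_le_triangleMean {p : ℝ} (hp : p ∈ Set.Ioo (0 : ℝ) 1) :
    ∃ δ > 0, ∃ C > 0, ∀ (d : ℕ) (α : Fin d → ℝ), (∀ i, 0 ≤ α i) → α ≠ 0 →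
      ∀ t, IsThreshold d α p t → δ * (nrm 3 α / nrm 2 α) ^ 3 - C * (nrm 4 α / nrm 2 α) ^ 4
        ≤ triangleMean α p t := by
  obtain ⟨δ, hδ, C, hC, h⟩ := exists_le_triangleMean_of_sum_sq_eq_one hp
  refine ⟨δ, hδ, C, hC, fun d α hα hα₀ t ht => ?_⟩
  have h_pos := nrm_pos hα hα₀ 2
  have h_inv := inv_pos.2 h_pos
  rw [← triangleMean_smul h_inv, ← sum_smul_pow_eq_nrm_div_pow hα _ three_ne_zero,
    ← sum_smul_pow_eq_nrm_div_pow hα _ four_ne_zero]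
  refine h d ((nrm 2 α)⁻¹ • α) (fun i => mul_nonneg h_inv.le (hα i)) ?_ _ (ht.smul h_inv)
  rw [sum_smul_pow_eq_nrm_div_pow hα _ two_ne_zero, div_self h_pos.ne', one_pow]

end Scaling

section TriangleCount

variable {n d : ℕ}

instance (α : Fin d → ℝ) : IsProbabilityMeasure (sampleMeasure n d α) := by
  unfold sampleMeasure
  infer_instance

lemma measurePreserving_triple_sampleMeasure (α : Fin d → ℝ) {i j k : Fin n} (hij : i ≠ j)
    (hik : i ≠ k) (hjk : j ≠ k) :
    MeasurePreserving (fun X => ((X j, X k), X i)) (sampleMeasure n d α)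
      (((gaussPi d α).prod (gaussPi d α)).prod (gaussPi d α)) := by
  have h_ind : iIndepFun (fun (i : Fin n) (X : Fin n → Fin d → ℝ) => X i) (sampleMeasure n d α) :=
    iIndepFun_pi (X := fun _ x => x) fun _ => aemeasurable_id
  have h_meas (i : Fin n) : Measurable fun X : Fin n → Fin d → ℝ => X i := measurable_pi_apply i
  have h_law (i : Fin n) : (sampleMeasure n d α).map (fun X => X i) = gaussPi d α :=
    (measurePreserving_eval (fun _ : Fin n => gaussPi d α) i).map_eq
  refine ⟨by fun_prop, ?_⟩
  rw [(h_ind.indepFun_prodMk h_meas j k i hij.symm hik.symm).map_prod_eq_prod_map_map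
      ((h_meas j).prodMk (h_meas k)).aemeasurable (h_meas i).aemeasurable,
    (h_ind.indepFun hjk).map_prod_eq_prod_map_map (h_meas j).aemeasurable (h_meas k).aemeasurable,
    h_law, h_law, h_law]

lemma integral_triple_eq_triangleMean (α : Fin d → ℝ) (p t : ℝ) {i j k : Fin n} (hij : i ≠ j)
    (hik : i ≠ k) (hjk : j ≠ k) :
    ∫ X, (edgeInd t X i j - p) * (edgeInd t X i k - p) * (edgeInd t X j k - p)
      ∂(sampleMeasure n d α) = triangleMean α p t := by
  have h_map := measurePreserving_triple_sampleMeasure α hij hik hjk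
  rw [triangleMean, ← h_map.map_eq, integral_map h_map.measurable.aemeasurable
    (integrable_signedInd_triangle (by fun_prop) (by fun_prop) (by fun_prop) p
      t).aestronglyMeasurable]
  exact integral_congr_ae (ae_of_all _ fun X => mul_comm _ _)

lemma integrable_triple_sampleMeasure (α : Fin d → ℝ) (p t : ℝ) (i j k : Fin n) :
    Integrable (fun X => if i ≠ j ∧ i ≠ k ∧ j ≠ k then
      (edgeInd t X i j - p) * (edgeInd t X i k - p) * (edgeInd t X j k - p) else 0)
      (sampleMeasure n d α) := by
  split_ifs
  · exact (integrable_signedInd_triangle (measurable_pi_apply i) (measurable_pi_apply j)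
      (measurable_pi_apply k) p t).congr (ae_of_all _ fun X => mul_comm _ _)
  · exact integrable_zero _ _ _

lemma sum_distinct_triples (n : ℕ) (E : ℝ) :
    ∑ i : Fin n, ∑ j : Fin n, ∑ k : Fin n, (if i ≠ j ∧ i ≠ k ∧ j ≠ k then E else 0)
      = 6 * n.choose 3 * E := by
  have h_third (i j : Fin n) : ∑ k : Fin n, (if i ≠ j ∧ i ≠ k ∧ j ≠ k then E else 0)
      = (n - 2) * E - if i = j then (n - 2) * E else 0 := by
    rcases eq_or_ne i j with rfl | hij
    · simp
    have h_split (k : Fin n) : (if i ≠ j ∧ i ≠ k ∧ j ≠ k then E else 0)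
        = E - (if i = k then E else 0) - if j = k then E else 0 := by
      split_ifs <;> simp_all
    simp only [h_split, Finset.sum_sub_distrib, Finset.sum_ite_eq, hij]
    simp
    ring
  have h_choose : (n.choose 3 : ℝ) = n * (n - 1) * (n - 2) / 6 := by
    rw [Nat.cast_choose_eq_descPochhammer_div]
    simp [descPochhammer_succ_right, Nat.factorial]
  simp only [h_third, Finset.sum_sub_distrib, Finset.sum_ite_eq, Finset.mem_univ, if_true,
    Finset.sum_const, Finset.card_univ, Fintype.card_fin, nsmul_eq_mul, h_choose]
  ring

theorem integral_tauCount (n : ℕ) (α : Fin d → ℝ) (p t : ℝ) :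
    ∫ X, tauCount p t X ∂(sampleMeasure n d α) = n.choose 3 * triangleMean α p t := by
  have h_int := integrable_triple_sampleMeasure (n := n) α p t
  have h_term (i j k : Fin n) : ∫ X, (if i ≠ j ∧ i ≠ k ∧ j ≠ k then
      (edgeInd t X i j - p) * (edgeInd t X i k - p) * (edgeInd t X j k - p) else 0)
      ∂(sampleMeasure n d α) = if i ≠ j ∧ i ≠ k ∧ j ≠ k then triangleMean α p t else 0 := by
    split_ifs with h
    · exact integral_triple_eq_triangleMean α p t h.1 h.2.1 h.2.2
    · exact integral_zero _ _
  calc _ = 1 / 6 * ∑ i : Fin n, ∑ j : Fin n, ∑ k : Fin n,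
        if i ≠ j ∧ i ≠ k ∧ j ≠ k then triangleMean α p t else 0 := by
        unfold tauCount
        rw [integral_const_mul, integral_finsetSum _ fun i _ => integrable_finsetSum _ fun j _ =>
          integrable_finsetSum _ fun k _ => h_int i j k]
        simp only [integral_finsetSum _ fun j _ => integrable_finsetSum _ fun k _ => h_int _ j k,
          integral_finsetSum _ fun k _ => h_int _ _ k, h_term]
    _ = _ := by
        rw [sum_distinct_triples]
        ring

end TriangleCount

theorem tau_expectation_lower_bound_general (p : ℝ) (hp : p ∈ Set.Ioo (0 : ℝ) 1) :
    ∃ δ > (0 : ℝ), ∃ ε > (0 : ℝ), ∀ (n d : ℕ) (α : Fin d → ℝ), (∀ i, 0 ≤ α i) → α ≠ 0 →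
      (nrm 4 α / nrm 2 α) ^ 4 ≤ ε * (nrm 3 α / nrm 2 α) ^ 3 →
      ∀ t : ℝ, IsThreshold d α p t →
        δ * (n.choose 3 : ℝ) * (nrm 3 α / nrm 2 α) ^ 3
          ≤ ∫ X, tauCount p t X ∂(sampleMeasure n d α) := by
  obtain ⟨δ, hδ, C, hC, h⟩ := exists_le_triangleMean hp
  refine ⟨δ / 2, half_pos hδ, δ / (2 * C), by positivity, fun n d α hα hα₀ h_ratio t ht => ?_⟩
  have h_error : C * (nrm 4 α / nrm 2 α) ^ 4 ≤ δ / 2 * (nrm 3 α / nrm 2 α) ^ 3 :=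
    calc _ ≤ C * (δ / (2 * C) * (nrm 3 α / nrm 2 α) ^ 3) := by gcongr
      _ = _ := by field_simp
  rw [integral_tauCount, mul_comm (δ / 2), mul_assoc]
  gcongr
  linarith [h d α hα hα₀ t ht]

/-- There are `δ_p, c_p > 0` depending only on `p` such that for
`n ≥ 3` and `‖α‖₂² > c_p`, `E[τ(G(n,p,α))] ≥ δ_p · C(n,3) · (‖α‖₃/‖α‖₂)³`. -/
theorem tau_expectation_lower_bound (p : ℝ) (hp : p ∈ Set.Ioo (0 : ℝ) 1) :
    ∃ δ > (0 : ℝ), ∃ c > (0 : ℝ), ∀ (n : ℕ), 3 ≤ n → ∀ (d : ℕ) (α : Fin d → ℝ),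
      (∀ i, α i ∈ Set.Icc (0 : ℝ) 1) → (∃ i, α i = 1) →
      nrm 2 α ^ 2 > c →
      ∀ t : ℝ, IsThreshold d α p t →
        δ * (n.choose 3 : ℝ) * (nrm 3 α / nrm 2 α) ^ 3
          ≤ ∫ X, tauCount p t X ∂(sampleMeasure n d α) := by
  obtain ⟨δ, hδ, ε, hε, h⟩ := tau_expectation_lower_bound_general p hp
  refine ⟨δ, hδ, ε⁻¹ ^ 2, by positivity, fun n _ d α hα hα₁ h₂ => ?_⟩
  have hα₀ : α ≠ 0 := fun h₀ => by simp [h₀] at hα₁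
  exact h n d α (fun i => (hα i).1) hα₀ (nrm_four_div_pow_le_mul hα hε h₂)

end
end
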